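/- Let f be a homeomorphism of the open annulus 𝔸 isotopic to the identity and satisfying the intersection property, and let F be a lift of f to ℝ². Assume that the weak rotation set Rot_weak(F) is contained in a Farey interval ]p/q, p'/q'[. Then there exists an essential line γ in 𝔸 such that the lines γ, f(γ), …, f^{q+q'−1}(γ) are pairwise disjoint; moreover, the cyclic order of these lines in 𝔸 is the same as the cyclic order of the q+q'−1 first iterates of a vertical line {θ}×ℝ under the rigid rotation of angle ρ, for any ρ ∈ ]p/q, p'/q'[. -/

import Mathlib

open Filter Topology Set

noncomputable section

/-- The plane ℝ². -/
abbrev Plane := ℝ × ℝ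

/-- The open annulus 𝔸 = ℝ/ℤ × ℝ. -/
abbrev Ann := AddCircle (1 : ℝ) × ℝ

/-- The covering map π : ℝ² → 𝔸, (x,y) ↦ (x + ℤ, y). -/
def prj : Plane → Ann := fun p => ((p.1 : AddCircle (1 : ℝ)), p.2)

/-- The deck transformation T^k : ℝ² → ℝ², (x,y) ↦ (x + k, y). -/
def Tr (k : ℤ) : Plane → Plane := fun p => (p.1 + (k : ℝ), p.2)

/-- `F` is a lift of `f` to the universal cover ℝ² of the annulus. -/
def IsLift (f : Ann ≃ₜ Ann) (F : Plane ≃ₜ Plane) : Prop :=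
  ∀ p : Plane, prj (F p) = f (prj p)

/-- `f` is isotopic to the identity: there is a continuous family of homeomorphisms
joining the identity to `f`. -/
def IsotopicToId (f : Ann ≃ₜ Ann) : Prop :=
  ∃ H : ℝ → Ann → Ann,
    Continuous (fun q : ℝ × Ann => H q.1 q.2) ∧
    (∀ t : ℝ, ∃ h : Ann ≃ₜ Ann, ∀ z, H t z = h z) ∧
    (∀ z, H 0 z = z) ∧ (∀ z, H 1 z = f z)

/-- An essential circle in 𝔸: a simple closed curve which is not null-homotopic. -/
def IsEssentialCircle (c : Set Ann) : Prop :=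
  ∃ φ : C(AddCircle (1 : ℝ), Ann), Function.Injective φ ∧ Set.range φ = c ∧
    ¬ ∃ pt : Ann, φ.Homotopic (ContinuousMap.const _ pt)

/-- `f` has the intersection property: every essential circle meets its image. -/
def IntersectionProperty (f : Ann → Ann) : Prop :=
  ∀ c : Set Ann, IsEssentialCircle c → (c ∩ f '' c).Nonempty

/-- `z` is a positively recurrent point of `g`: some subsequence of the forward orbit
of `z` converges to `z`. -/
def PosRec {X : Type*} [TopologicalSpace X] (g : X → X) (z : X) : Prop :=
  ∃ φ : ℕ → ℕ, StrictMono φ ∧ Tendsto (fun k => g^[φ k] z) atTop (𝓝 z)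

/-- The positively recurrent point `z` has rotation number `ρ` for the lift `F` of `f`. -/
def HasRotNum (f : Ann → Ann) (F : Plane → Plane) (z : Ann) (ρ : ℝ) : Prop :=
  PosRec f z ∧
    ∀ zt : Plane, prj zt = z →
      ∀ φ : ℕ → ℕ, StrictMono φ →
        Tendsto (fun k => f^[φ k] z) atTop (𝓝 z) →
        Tendsto (fun k => ((F^[φ k] zt).1 - zt.1) / (φ k : ℝ)) atTop (𝓝 ρ)

/-- The rotation set Rot(F): the set of rotation numbers of positively recurrent
points of `f`. -/
def Rot (f : Ann → Ann) (F : Plane → Plane) : Set ℝ := {ρ | ∃ z, HasRotNum f F z ρ}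

/-- The region `L(Γ)` of the plane on the left (west) of a line `Γ` (as a subset of ℝ²):
points lying in the connected component of the complement of `Γ` containing all far-west
points of the horizontal axis. -/
def Lset (Γ : Set Plane) : Set Plane :=
  {p | ∃ s : ℝ, ∀ x ≤ s, p ∈ connectedComponentIn Γᶜ ((x, 0) : Plane)}

/-- The region `R(Γ)` of the plane on the right (east) of a line `Γ`. -/
def Rset (Γ : Set Plane) : Set Plane :=
  {p | ∃ s : ℝ, ∀ x ≥ s, p ∈ connectedComponentIn Γᶜ ((x, 0) : Plane)}

/-- The relation `Γ₁ < Γ₂` on (essential, oriented from south to north) lines: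
`Cl(L(Γ₁)) ⊆ L(Γ₂)`. -/
def lineLT (Γ₁ Γ₂ : Set Plane) : Prop := closure (Lset Γ₁) ⊆ Lset Γ₂

/-- An essential line in ℝ², oriented from south to north: a properly embedded copy of ℝ
whose second coordinate tends to ±∞ at ±∞. -/
def IsEssLinePlane (Γ : ℝ → Plane) : Prop :=
  Continuous Γ ∧ Function.Injective Γ ∧ IsProperMap Γ ∧
    Tendsto (fun t => (Γ t).2) atTop atTop ∧ Tendsto (fun t => (Γ t).2) atBot atBot

/-- An essential line in the annulus 𝔸: a properly embedded simple path joining one end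
to the other. -/
def IsEssLineAnn (γ : ℝ → Ann) : Prop :=
  Continuous γ ∧ Function.Injective γ ∧ IsProperMap γ ∧
    ((Tendsto (fun t => (γ t).2) atTop atTop ∧ Tendsto (fun t => (γ t).2) atBot atBot) ∨
     (Tendsto (fun t => (γ t).2) atTop atBot ∧ Tendsto (fun t => (γ t).2) atBot atTop))

/-- An oriented essential line in 𝔸 joining the lower end S to the upper end N. -/
def IsEssLineAnnSN (γ : ℝ → Ann) : Prop :=
  Continuous γ ∧ Function.Injective γ ∧ IsProperMap γ ∧
    Tendsto (fun t => (γ t).2) atTop atTop ∧ Tendsto (fun t => (γ t).2) atBot atBot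

/-- The weak rotation set of `F` relative to a compact set `K` of the annulus,
as a subset of [-∞,+∞]. -/
def RotWeakK (F : Plane → Plane) (K : Set Ann) : Set EReal :=
  {r | ∃ zs : ℕ → Plane, ∃ ns : ℕ → ℕ,
      (∀ k, prj (zs k) ∈ K) ∧ (∀ k, prj (F^[ns k] (zs k)) ∈ K) ∧
      (∀ k, 0 < ns k) ∧ Tendsto ns atTop atTop ∧
      Tendsto (fun k => ((((F^[ns k] (zs k)).1 - (zs k).1) / (ns k : ℝ) : ℝ) : EReal))
        atTop (𝓝 r)}

/-- The weak rotation set of `F`: union of the `RotWeakK F K` over all compact `K ⊆ 𝔸`. -/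
def RotWeak (F : Plane → Plane) : Set EReal :=
  ⋃ K ∈ {K : Set Ann | IsCompact K}, RotWeakK F K


/-! ### Lattice part -/

/-- Hexagonal hat function. -/
def hat (x y : ℝ) : ℝ := max 0 (1 - max (max |x| |y|) |x + y|)

/-- Barycentric weight of the lattice point `v` at `z`. -/
def wt (v : ℤ × ℤ) (z : Plane) : ℝ := hat (z.1 - v.1) (z.2 - v.2)

lemma wt_cont (v : ℤ × ℤ) : Continuous (wt v) := by
  unfold wt hat
  fun_prop

lemma wt_pos_near {v : ℤ × ℤ} {z : Plane} (h : wt v z ≠ 0) :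
    |z.1 - v.1| < 1 ∧ |z.2 - v.2| < 1 := by
  unfold wt hat at h
  by_contra hc
  apply h
  apply max_eq_left
  rw [not_and_or, not_lt, not_lt] at hc
  rcases hc with hc | hc
  · have := le_max_left (max |z.1 - v.1| |z.2 - v.2|) |z.1 - v.1 + (z.2 - v.2)|
    have := le_max_left |z.1 - v.1| |z.2 - v.2|
    linarith
  · have := le_max_left (max |z.1 - v.1| |z.2 - v.2|) |z.1 - v.1 + (z.2 - v.2)|
    have := le_max_right |z.1 - v.1| |z.2 - v.2|
    linarith

lemma finite_near (z : Plane) (r : ℝ) :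
    {v : ℤ × ℤ | |z.1 - v.1| < r ∧ |z.2 - v.2| < r}.Finite := by
  apply ((Set.finite_Icc (⌊z.1 - r⌋) (⌈z.1 + r⌉)).prod
    (Set.finite_Icc (⌊z.2 - r⌋) (⌈z.2 + r⌉))).subset
  rintro ⟨a, b⟩ ⟨h1, h2⟩
  simp only [abs_lt] at h1 h2
  refine ⟨⟨?_, ?_⟩, ⟨?_, ?_⟩⟩
  · have := Int.floor_le (z.1 - r)
    have : ((⌊z.1 - r⌋ : ℤ) : ℝ) ≤ (a : ℝ) := by linarith
    exact_mod_cast this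
  · have := Int.le_ceil (z.1 + r)
    have : (a : ℝ) ≤ ((⌈z.1 + r⌉ : ℤ) : ℝ) := by linarith
    exact_mod_cast this
  · have := Int.floor_le (z.2 - r)
    have : ((⌊z.2 - r⌋ : ℤ) : ℝ) ≤ (b : ℝ) := by linarith
    exact_mod_cast this
  · have := Int.le_ceil (z.2 + r)
    have : (b : ℝ) ≤ ((⌈z.2 + r⌉ : ℤ) : ℝ) := by linarith
    exact_mod_cast this

lemma wt_locfin : LocallyFinite fun v : ℤ × ℤ => Function.support (wt v) := by
  intro z
  refine ⟨Metric.ball z 1, Metric.ball_mem_nhds z one_pos, (finite_near z 2).subset ?_⟩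
  rintro v ⟨y, hy, hyz⟩
  have h := wt_pos_near hy
  rw [Metric.mem_ball, Prod.dist_eq, max_lt_iff, Real.dist_eq, Real.dist_eq] at hyz
  constructor
  · calc |z.1 - v.1| = |(y.1 - v.1) - (y.1 - z.1)| := by ring_nf
      _ ≤ |y.1 - v.1| + |y.1 - z.1| := abs_sub _ _
      _ < 2 := by linarith [h.1, hyz.1]
  · calc |z.2 - v.2| = |(y.2 - v.2) - (y.2 - z.2)| := by ring_nf
      _ ≤ |y.2 - v.2| + |y.2 - z.2| := abs_sub _ _
      _ < 2 := by linarith [h.2, hyz.2]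

open Classical in
/-- sign of a lattice point -/
def sg (S : Set (ℤ × ℤ)) (v : ℤ × ℤ) : ℝ := if v ∈ S then 1 else -1

lemma sg_mem {S : Set (ℤ × ℤ)} {v : ℤ × ℤ} (h : v ∈ S) : sg S v = 1 := by simp [sg, h]
lemma sg_not {S : Set (ℤ × ℤ)} {v : ℤ × ℤ} (h : v ∉ S) : sg S v = -1 := by simp [sg, h]
lemma sg_compl (S : Set (ℤ × ℤ)) (v : ℤ × ℤ) : sg Sᶜ v = - sg S v := by
  by_cases h : v ∈ S
  · rw [sg_mem h, sg_not (by simpa using h)]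
  · rw [sg_not h, sg_mem (by simpa using h)]; simp

/-- piecewise linear function attached to `S`. -/
def gf (S : Set (ℤ × ℤ)) (z : Plane) : ℝ := ∑ᶠ v, sg S v * wt v z

lemma gf_cont (S : Set (ℤ × ℤ)) : Continuous (gf S) := by
  unfold gf
  apply continuous_finsum
  · intro v
    exact continuous_const.mul (wt_cont v)
  · apply wt_locfin.subset
    intro v z hz
    simp only [Function.mem_support] at hz ⊢
    exact right_ne_zero_of_mul hz

lemma gf_compl (S : Set (ℤ × ℤ)) (z : Plane) : gf Sᶜ z = - gf S z := by
  unfold gf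
  rw [← finsum_neg_distrib]
  congr 1
  ext v
  rw [sg_compl]
  ring

/-- adjacency in the triangular lattice -/
def Adj (a b : ℤ × ℤ) : Prop :=
  (b.1 = a.1 + 1 ∧ b.2 = a.2) ∨ (b.1 = a.1 ∧ b.2 = a.2 + 1) ∨ (b.1 = a.1 - 1 ∧ b.2 = a.2 + 1) ∨
  (b.1 = a.1 - 1 ∧ b.2 = a.2) ∨ (b.1 = a.1 ∧ b.2 = a.2 - 1) ∨ (b.1 = a.1 + 1 ∧ b.2 = a.2 - 1)

lemma Adj.symm {a b : ℤ × ℤ} (h : Adj a b) : Adj b a := by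
  unfold Adj at *; omega

/-- apex of the triangle on the left of `(a,b)` -/
def apex (a b : ℤ × ℤ) : ℤ × ℤ := (a.1 - (b.2 - a.2), a.2 + (b.1 - a.1) + (b.2 - a.2))
/-- apex of the triangle on the right of `(a,b)` -/
def apex' (a b : ℤ × ℤ) : ℤ × ℤ := (a.1 + (b.1 - a.1) + (b.2 - a.2), a.2 - (b.1 - a.1))

/-- positively oriented triangle -/
def IsTri (a b c : ℤ × ℤ) : Prop := Adj a b ∧ c = apex a b

lemma IsTri.rot {a b c : ℤ × ℤ} (h : IsTri a b c) : IsTri b c a := by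
  obtain ⟨a1, a2⟩ := a; obtain ⟨b1, b2⟩ := b; obtain ⟨c1, c2⟩ := c
  simp only [IsTri, Adj, apex, Prod.mk.injEq] at *; omega

lemma IsTri.adj {a b c : ℤ × ℤ} (h : IsTri a b c) : Adj a b := h.1

lemma hat_neg (x y : ℝ) : hat (-x) (-y) = hat x y := by
  unfold hat
  rw [abs_neg, abs_neg, ← neg_add, abs_neg]

lemma hat_zero {x y : ℝ} (h : 1 ≤ |x| ∨ 1 ≤ |y| ∨ 1 ≤ |x + y|) : hat x y = 0 := by
  unfold hat
  apply max_eq_left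
  have := le_max_left (max |x| |y|) |x + y|
  have := le_max_right (max |x| |y|) |x + y|
  have := le_max_left |x| |y|
  have := le_max_right |x| |y|
  rcases h with h | h | h <;> linarith

lemma hat_up (k l : ℤ) (β γ : ℝ) (hβ : 0 ≤ β) (hγ : 0 ≤ γ) (h1 : β + γ ≤ 1) :
    hat (β - k) (γ - l) = (if k = 0 ∧ l = 0 then 1 - β - γ else 0) +
      (if k = 1 ∧ l = 0 then β else 0) + (if k = 0 ∧ l = 1 then γ else 0) := by
  have big : (2 ≤ k ∨ k ≤ -1 ∨ 2 ≤ l ∨ l ≤ -1) → hat (β - k) (γ - l) = 0 := by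
    intro h
    apply hat_zero
    rcases h with h | h | h | h
    · left
      have : (2 : ℝ) ≤ k := by exact_mod_cast h
      rw [abs_of_nonpos] <;> linarith
    · left
      have : (k : ℝ) ≤ -1 := by exact_mod_cast h
      rw [abs_of_nonneg] <;> linarith
    · right; left
      have : (2 : ℝ) ≤ l := by exact_mod_cast h
      rw [abs_of_nonpos] <;> linarith
    · right; left
      have : (l : ℝ) ≤ -1 := by exact_mod_cast h
      rw [abs_of_nonneg] <;> linarith
  by_cases hb : (2 ≤ k ∨ k ≤ -1 ∨ 2 ≤ l ∨ l ≤ -1)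
  · rw [big hb, if_neg (by omega), if_neg (by omega), if_neg (by omega)]; simp
  have hk : k = 0 ∨ k = 1 := by omega
  have hl : l = 0 ∨ l = 1 := by omega
  rcases hk with rfl | rfl <;> rcases hl with rfl | rfl
  · simp [hat]
    rw [abs_of_nonneg hβ, abs_of_nonneg hγ, abs_of_nonneg (by linarith : 0 ≤ β + γ),
      max_eq_right (max_le (by linarith) (by linarith) : max β γ ≤ β + γ)]
    rw [max_eq_right (by linarith)]; ring
  · simp [hat]
    rw [abs_of_nonneg hβ, abs_of_nonpos (by linarith : γ - 1 ≤ 0),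
      abs_of_nonpos (by linarith : β + (γ - 1) ≤ 0), max_eq_right (by linarith : β ≤ -(γ - 1)),
      max_eq_left (by linarith : -(β + (γ - 1)) ≤ -(γ - 1)),
      max_eq_right (by linarith : 0 ≤ 1 - -(γ - 1))]
    ring
  · simp [hat]
    rw [abs_of_nonneg hγ, abs_of_nonpos (by linarith : β - 1 ≤ 0),
      abs_of_nonpos (by linarith : β - 1 + γ ≤ 0), max_eq_left (by linarith : γ ≤ -(β - 1)),
      max_eq_left (by linarith : -(β - 1 + γ) ≤ -(β - 1)),
      max_eq_right (by linarith : 0 ≤ 1 - -(β - 1))]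
    ring
  · rw [hat_zero]
    · simp
    · right; right
      push_cast
      rw [abs_of_nonpos] <;> linarith

/-- `z` has barycentric coordinates `α β γ` in the triangle `a b c`. -/
structure Bary (z : Plane) (a b c : ℤ × ℤ) (α β γ : ℝ) : Prop where
  tri : IsTri a b c
  ha : 0 ≤ α
  hb : 0 ≤ β
  hc : 0 ≤ γ
  sum : α + β + γ = 1
  fst : z.1 = α * a.1 + β * b.1 + γ * c.1
  snd : z.2 = α * a.2 + β * b.2 + γ * c.2

lemma Bary.rot {z a b c α β γ} (h : Bary z a b c α β γ) : Bary z b c a β γ α :=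
  ⟨h.tri.rot, h.hb, h.hc, h.ha, by linarith [h.sum], by linarith [h.fst], by linarith [h.snd]⟩

lemma Bary.wt_aux {z a b c α β γ} (h : Bary z a b c α β γ)
    (hd : (b.1 = a.1 + 1 ∧ b.2 = a.2) ∨ (b.1 = a.1 - 1 ∧ b.2 = a.2)) (v : ℤ × ℤ) :
    wt v z = (if v = a then α else 0) + (if v = b then β else 0) + (if v = c then γ else 0) := by
  obtain ⟨⟨-, hc⟩, h1, h2, h3, hs, hx, hy⟩ := h
  obtain ⟨a1, a2⟩ := a; obtain ⟨b1, b2⟩ := b; obtain ⟨c1, c2⟩ := c; obtain ⟨v1, v2⟩ := v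
  simp only [apex, Prod.mk.injEq] at *
  obtain ⟨rfl, rfl⟩ := hc
  have hα : α = 1 - β - γ := by linarith
  rcases hd with ⟨rfl, rfl⟩ | ⟨rfl, rfl⟩
  · have := hat_up (v1 - a1) (v2 - b2) β γ h2 h3 (by linarith)
    simp only [wt]
    rw [hx, hy]
    convert this using 2
    · push_cast; rw [hα]; ring
    · push_cast; rw [hα]; ring
    · congr 1
      · rw [hα]; congr 1; apply propext; omega
      · congr 1; apply propext; omega
    · congr 1; apply propext; omega
  · have := hat_up (a1 - v1) (b2 - v2) β γ h2 h3 (by linarith)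
    simp only [wt]
    rw [hx, hy, ← hat_neg]
    convert this using 2
    · push_cast; rw [hα]; ring
    · push_cast; rw [hα]; ring
    · congr 1
      · rw [hα]; congr 1; apply propext; omega
      · congr 1; apply propext; omega
    · congr 1; apply propext; omega

lemma Bary.wt {z a b c α β γ} (h : Bary z a b c α β γ) (v : ℤ × ℤ) :
    wt v z = (if v = a then α else 0) + (if v = b then β else 0) + (if v = c then γ else 0) := by
  have key : ((b.1 = a.1 + 1 ∧ b.2 = a.2) ∨ (b.1 = a.1 - 1 ∧ b.2 = a.2)) ∨
    ((c.1 = b.1 + 1 ∧ c.2 = b.2) ∨ (c.1 = b.1 - 1 ∧ c.2 = b.2)) ∨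
    ((a.1 = c.1 + 1 ∧ a.2 = c.2) ∨ (a.1 = c.1 - 1 ∧ a.2 = c.2)) := by
    obtain ⟨⟨h1, hc⟩, -⟩ := h
    obtain ⟨a1, a2⟩ := a; obtain ⟨b1, b2⟩ := b; obtain ⟨c1, c2⟩ := c
    simp only [Adj, apex, Prod.mk.injEq] at *
    omega
  rcases key with k | k | k
  · exact h.wt_aux k v
  · rw [h.rot.wt_aux k v]; ring
  · rw [h.rot.rot.wt_aux k v]; ring

lemma IsTri.ne {a b c : ℤ × ℤ} (h : IsTri a b c) : a ≠ b ∧ b ≠ c ∧ c ≠ a := by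
  obtain ⟨a1, a2⟩ := a; obtain ⟨b1, b2⟩ := b; obtain ⟨c1, c2⟩ := c
  simp only [IsTri, Adj, apex, Prod.mk.injEq, ne_eq] at *; omega

lemma Bary.gf {z a b c α β γ} (h : Bary z a b c α β γ) (S : Set (ℤ × ℤ)) :
    gf S z = α * sg S a + β * sg S b + γ * sg S c := by
  obtain ⟨n1, n2, n3⟩ := h.tri.ne
  unfold _root_.gf
  rw [finsum_eq_sum_of_support_subset (s := {a, b, c})]
  · rw [Finset.sum_insert (by simp [n1, n3.symm]), Finset.sum_insert (by simp [n2]),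
      Finset.sum_singleton, h.wt, h.wt, h.wt]
    simp [n1, n2, n3, n1.symm, n2.symm, n3.symm]
    ring
  · intro v hv
    simp only [Function.mem_support] at hv
    have := right_ne_zero_of_mul hv
    rw [h.wt] at this
    by_contra hc
    simp only [Finset.coe_insert, Finset.coe_singleton, Set.mem_insert_iff,
      Set.mem_singleton_iff, not_or] at hc
    simp [hc] at this

lemma exists_bary (z : Plane) : ∃ a b c α β γ, Bary z a b c α β γ := by
  have f1 := Int.fract_add_floor z.1
  have f2 := Int.fract_add_floor z.2
  have g1 := Int.fract_nonneg z.1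
  have g2 := Int.fract_nonneg z.2
  have l1 := (Int.fract_lt_one z.1).le
  have l2 := (Int.fract_lt_one z.2).le
  by_cases h : Int.fract z.1 + Int.fract z.2 ≤ 1
  · refine ⟨(⌊z.1⌋, ⌊z.2⌋), (⌊z.1⌋ + 1, ⌊z.2⌋), (⌊z.1⌋, ⌊z.2⌋ + 1), 1 - Int.fract z.1 - Int.fract z.2,
      Int.fract z.1, Int.fract z.2, ⟨?_, ?_⟩, ?_, g1, g2, ?_, ?_, ?_⟩
    · simp [Adj]
    · simp [apex]
    · linarith
    · ring
    · push_cast; linarith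
    · push_cast; linarith
  · refine ⟨(⌊z.1⌋ + 1, ⌊z.2⌋ + 1), (⌊z.1⌋, ⌊z.2⌋ + 1), (⌊z.1⌋ + 1, ⌊z.2⌋),
      Int.fract z.1 + Int.fract z.2 - 1,
      1 - Int.fract z.1, 1 - Int.fract z.2, ⟨?_, ?_⟩, ?_, ?_, ?_, ?_, ?_, ?_⟩
    · simp [Adj]
    · simp [apex]
    · linarith
    · linarith
    · linarith
    · ring
    · push_cast; linarith
    · push_cast; linarith


/-- adjacency inside `S` -/
def rel (S : Set (ℤ × ℤ)) (x y : ℤ × ℤ) : Prop := Adj x y ∧ x ∈ S ∧ y ∈ S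

lemma rel_symm (S : Set (ℤ × ℤ)) : Std.Symm (rel S) := ⟨fun _ _ h => ⟨h.1.symm, h.2.2, h.2.1⟩⟩

lemma rtg_symm {S : Set (ℤ × ℤ)} {x y} (h : Relation.ReflTransGen (rel S) x y) :
    Relation.ReflTransGen (rel S) y x := by
  induction h with
  | refl => exact .refl
  | tail _ h2 ih => exact .head ⟨h2.1.symm, h2.2.2, h2.2.1⟩ ih

lemma rtg_mono {S S' : Set (ℤ × ℤ)} (hS : S ⊆ S') {x y} (h : Relation.ReflTransGen (rel S) x y) :
    Relation.ReflTransGen (rel S') x y :=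
  Relation.ReflTransGen.mono (fun _ _ h => ⟨h.1, hS h.2.1, hS h.2.2⟩) _ _ h

/-- discrete connectedness -/
def SConn (S : Set (ℤ × ℤ)) : Prop := ∀ a ∈ S, ∀ b ∈ S, Relation.ReflTransGen (rel S) a b

/-- discrete component -/
def comp (S : Set (ℤ × ℤ)) (a : ℤ × ℤ) : Set (ℤ × ℤ) := {b | Relation.ReflTransGen (rel S) a b}

lemma comp_sub {S : Set (ℤ × ℤ)} {a} (ha : a ∈ S) : comp S a ⊆ S := by
  intro b hb
  have hb : Relation.ReflTransGen (rel S) a b := hb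
  cases hb with
  | refl => exact ha
  | tail _ h => exact h.2.2

lemma mem_comp_self (S : Set (ℤ × ℤ)) (a) : a ∈ comp S a := Relation.ReflTransGen.refl

lemma comp_adj {S : Set (ℤ × ℤ)} {a x y} (ha : a ∈ S) (hx : x ∈ comp S a) (hy : y ∈ S)
    (h : Adj x y) : y ∈ comp S a :=
  Relation.ReflTransGen.tail hx ⟨h, comp_sub ha hx, hy⟩

lemma comp_conn (S : Set (ℤ × ℤ)) (a) : SConn (comp S a) := by
  have key : ∀ b ∈ comp S a, Relation.ReflTransGen (rel (comp S a)) a b := by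
    intro b hb
    have hb' : Relation.ReflTransGen (rel S) a b := hb
    clear hb
    induction hb' with
    | refl => exact .refl
    | tail h1 h2 ih => exact .tail ih ⟨h2.1, h1, h1.tail h2⟩
  intro x hx y hy
  exact (rtg_symm (key x hx)).trans (key y hy)

lemma lattice_conn (x y : ℤ × ℤ) : Relation.ReflTransGen Adj x y := by
  have h1 : ∀ (n : ℕ) (a b : ℤ), Relation.ReflTransGen Adj (a, b) (a + n, b) := by
    intro n a b
    induction n with
    | zero => simpa using Relation.ReflTransGen.refl
    | succ n ih => exact ih.tail (Or.inl ⟨by push_cast; ring, rfl⟩)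
  have h2 : ∀ (n : ℕ) (a b : ℤ), Relation.ReflTransGen Adj (a, b) (a, b + n) := by
    intro n a b
    induction n with
    | zero => simpa using Relation.ReflTransGen.refl
    | succ n ih => exact ih.tail (Or.inr (Or.inl ⟨rfl, by push_cast; ring⟩))
  have sym : ∀ {x y}, Relation.ReflTransGen Adj x y → Relation.ReflTransGen Adj y x := by
    intro x y h
    induction h with
    | refl => exact .refl
    | tail _ h2 ih => exact .head h2.symm ih
  have h1' : ∀ (a a' b : ℤ), Relation.ReflTransGen Adj (a, b) (a', b) := by
    intro a a' b
    rcases le_total a a' with h | h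
    · have := h1 (a' - a).toNat a b
      rwa [show a + ((a' - a).toNat : ℤ) = a' by omega] at this
    · have := h1 (a - a').toNat a' b
      rw [show a' + ((a - a').toNat : ℤ) = a by omega] at this
      exact sym this
  have h2' : ∀ (a b b' : ℤ), Relation.ReflTransGen Adj (a, b) (a, b') := by
    intro a b b'
    rcases le_total b b' with h | h
    · have := h2 (b' - b).toNat a b
      rwa [show b + ((b' - b).toNat : ℤ) = b' by omega] at this
    · have := h2 (b - b').toNat a b'
      rw [show b' + ((b - b').toNat : ℤ) = b by omega] at this
      exact sym this
  exact (h1' x.1 y.1 x.2).trans (h2' y.1 x.2 y.2)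

lemma compl_comp_conn {C : Set (ℤ × ℤ)} (hC : SConn C) {c0} (hc0 : c0 ∈ C) {b} (hb : b ∈ Cᶜ) :
    SConn (comp Cᶜ b)ᶜ := by
  set R := comp Cᶜ b with hR
  have hCR : C ⊆ Rᶜ := fun x hx hxR => comp_sub hb hxR hx
  have key : ∀ x, x ∉ R → ∃ c ∈ C, Relation.ReflTransGen (rel Rᶜ) x c := by
    intro x
    have h := lattice_conn x c0
    induction h using Relation.ReflTransGen.head_induction_on with
    | refl => intro _; exact ⟨c0, hc0, .refl⟩
    | @head x x' h1 h2 ih =>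
      intro hx
      by_cases hxC : x ∈ C
      · exact ⟨x, hxC, .refl⟩
      have hx' : x' ∉ R := fun h => hx (comp_adj hb h hxC h1.symm)
      obtain ⟨c, hc, hp⟩ := ih hx'
      exact ⟨c, hc, .head ⟨h1, hx, hx'⟩ hp⟩
  intro x hx y hy
  obtain ⟨c, hc, h1⟩ := key x hx
  obtain ⟨d, hd, h2⟩ := key y hy
  exact (h1.trans (rtg_mono hCR (hC c hc d hd))).trans (rtg_symm h2)

/-- lattice point as a point of the plane -/
def vec (v : ℤ × ℤ) : Plane := ((v.1 : ℝ), (v.2 : ℝ))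

lemma seg_sub {z a b c α β γ} (h : Bary z a b c α β γ) {S : Set (ℤ × ℤ)} (ha : a ∈ S)
    (hz : 0 ≤ gf S z) : segment ℝ z (vec a) ⊆ {z | 0 ≤ gf S z} := by
  rintro w ⟨s, r, hs, hr, hsr, rfl⟩
  have hB : Bary (s • z + r • vec a) a b c (s * α + r) (s * β) (s * γ) := by
    refine ⟨h.tri, ?_, mul_nonneg hs h.hb, mul_nonneg hs h.hc, ?_, ?_, ?_⟩
    · have := mul_nonneg hs h.ha; linarith
    · have := h.sum
      linear_combination s * this + hsr
    · simp [vec, h.fst]; ring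
    · simp [vec, h.snd]; ring
  have h1 := hB.gf S
  have h2 := h.gf S
  show 0 ≤ gf S _
  rw [h1]
  rw [sg_mem ha] at h2 ⊢
  have := mul_nonneg hs hz
  rw [h2] at this
  linarith

lemma bary_vec {a b c} (h : IsTri a b c) : Bary (vec a) a b c 1 0 0 :=
  ⟨h, by norm_num, le_rfl, le_rfl, by norm_num, by simp [vec], by simp [vec]⟩

lemma adj_isTri {a b} (h : Adj a b) : IsTri a b (apex a b) := ⟨h, rfl⟩

lemma gf_vec {S : Set (ℤ × ℤ)} {a} (h : a ∈ S) : gf S (vec a) = 1 := by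
  have hA : Adj a (a.1 + 1, a.2) := by simp [Adj]
  rw [(bary_vec (adj_isTri hA)).gf, sg_mem h]; ring

lemma exists_vertex {z a b c α β γ} (h : Bary z a b c α β γ) {S : Set (ℤ × ℤ)} (hz : 0 ≤ gf S z) :
    ∃ a b c α β γ, Bary z a b c α β γ ∧ a ∈ S := by
  by_cases ha : a ∈ S
  · exact ⟨_, _, _, _, _, _, h, ha⟩
  by_cases hb : b ∈ S
  · exact ⟨_, _, _, _, _, _, h.rot, hb⟩
  by_cases hc : c ∈ S
  · exact ⟨_, _, _, _, _, _, h.rot.rot, hc⟩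
  rw [h.gf, sg_not ha, sg_not hb, sg_not hc] at hz
  linarith [h.sum]

lemma Q_conn {S : Set (ℤ × ℤ)} (hS : SConn S) : IsPreconnected {z | 0 ≤ gf S z} := by
  have h1 : ∀ z, 0 ≤ gf S z → ∃ a ∈ S, JoinedIn {z | 0 ≤ gf S z} z (vec a) := by
    intro z hz
    obtain ⟨a, b, c, α, β, γ, h⟩ := exists_bary z
    obtain ⟨a, b, c, α, β, γ, h, ha⟩ := exists_vertex h hz
    exact ⟨a, ha, JoinedIn.of_segment_subset (seg_sub h ha hz)⟩
  have h2 : ∀ a ∈ S, ∀ b ∈ S, JoinedIn {z | 0 ≤ gf S z} (vec a) (vec b) := by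
    intro a ha b hb
    have h := hS a ha b hb
    clear hb
    induction h with
    | refl => exact JoinedIn.refl (by simp [gf_vec ha])
    | @tail x y _ hr ih =>
      refine ih.trans ?_
      have hB := bary_vec (adj_isTri hr.1)
      exact JoinedIn.of_segment_subset (seg_sub hB.rot hr.2.2 (by rw [gf_vec hr.2.1]; norm_num))
  apply isPreconnected_of_forall_pair
  intro x hx y hy
  obtain ⟨a, ha, ja⟩ := h1 x hx
  obtain ⟨b, hb, jb⟩ := h1 y hy
  obtain ⟨γ, hγ⟩ := (ja.trans (h2 a ha b hb)).trans jb.symm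
  refine ⟨Set.range γ, ?_, ⟨0, by simp⟩, ⟨1, by simp⟩, isPreconnected_range γ.continuous⟩
  rintro _ ⟨t, rfl⟩
  exact hγ t

lemma tri_adj3 {a b c} (h : IsTri a b c) : Adj a b ∧ Adj b c ∧ Adj c a :=
  ⟨h.1, h.rot.1, h.rot.rot.1⟩

lemma sg_le {S S' : Set (ℤ × ℤ)} (h : S ⊆ S') (v) : sg S v ≤ sg S' v := by
  by_cases hv : v ∈ S
  · rw [sg_mem hv, sg_mem (h hv)]
  · rw [sg_not hv]; by_cases hv' : v ∈ S'
    · rw [sg_mem hv']; norm_num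
    · rw [sg_not hv']

lemma gf_mono {S S' : Set (ℤ × ℤ)} (h : S ⊆ S') (z) : gf S z ≤ gf S' z := by
  obtain ⟨a, b, c, α, β, γ, hB⟩ := exists_bary z
  rw [hB.gf, hB.gf]
  have := mul_le_mul_of_nonneg_left (sg_le h a) hB.ha
  have := mul_le_mul_of_nonneg_left (sg_le h b) hB.hb
  have := mul_le_mul_of_nonneg_left (sg_le h c) hB.hc
  linarith

lemma gf_comp_eq {z a b c α β γ} (h : Bary z a b c α β γ) {S : Set (ℤ × ℤ)} {s} (hs : s ∈ S)
    (ha : a ∈ comp S s) : gf (comp S s) z = gf S z := by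
  have key : ∀ v, Adj a v → sg (comp S s) v = sg S v := by
    intro v hv
    by_cases hvS : v ∈ S
    · rw [sg_mem hvS, sg_mem (comp_adj hs ha hvS hv)]
    · rw [sg_not hvS, sg_not (fun h => hvS (comp_sub hs h))]
  obtain ⟨h1, h2, h3⟩ := tri_adj3 h.tri
  rw [h.gf, h.gf, key b h1, key c h3.symm, sg_mem ha, sg_mem (comp_sub hs ha)]

lemma comp_clopen {S : Set (ℤ × ℤ)} {s} (hs : s ∈ S) {t : Set Plane} (ht : IsPreconnected t)
    (htS : ∀ z ∈ t, 0 < gf S z) (hne : ∃ z ∈ t, 0 < gf (comp S s) z) :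
    ∀ z ∈ t, 0 < gf (comp S s) z := by
  have hsub : t ⊆ {z | 0 < gf (comp S s) z} := by
    refine ht.subset_left_of_subset_union (v := {z | 0 < gf (S \ comp S s) z})
      (isOpen_lt continuous_const (gf_cont _)) (isOpen_lt continuous_const (gf_cont _)) ?_ ?_ ?_
    · rw [Set.disjoint_left]
      intro z hz hz'
      obtain ⟨a, b, c, α, β, γ, hB⟩ := exists_bary z
      have hz : 0 < gf _ z := hz
      have hz' : 0 < gf _ z := hz'
      rw [hB.gf] at hz hz'
      have key : ∀ v, sg (comp S s) v + sg (S \ comp S s) v ≤ 0 := by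
        intro v
        by_cases hv : v ∈ comp S s
        · rw [sg_mem hv, sg_not (fun h => h.2 hv)]; norm_num
        · rw [sg_not hv]
          have := sg_le (Set.subset_univ (S \ comp S s)) v
          rw [sg_mem (Set.mem_univ _)] at this
          linarith
      have := mul_nonneg hB.ha (neg_nonneg.2 (key a))
      have := mul_nonneg hB.hb (neg_nonneg.2 (key b))
      have := mul_nonneg hB.hc (neg_nonneg.2 (key c))
      linarith
    · intro z hz
      have hz0 := htS z hz
      obtain ⟨a, b, c, α, β, γ, hB⟩ := exists_bary z
      by_cases ha : a ∈ comp S s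
      · left; show 0 < gf _ z; rwa [gf_comp_eq hB hs ha]
      by_cases hb : b ∈ comp S s
      · left; show 0 < gf _ z; rwa [gf_comp_eq hB.rot hs hb]
      by_cases hc : c ∈ comp S s
      · left; show 0 < gf _ z; rwa [gf_comp_eq hB.rot.rot hs hc]
      right
      have key : ∀ v, v ∉ comp S s → sg (S \ comp S s) v = sg S v := by
        intro v hv
        by_cases hvS : v ∈ S
        · rw [sg_mem hvS, sg_mem (S := S \ comp S s) ⟨hvS, hv⟩]
        · rw [sg_not hvS, sg_not (fun h => hvS h.1)]
      show 0 < gf _ z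
      rw [hB.gf] at hz0 ⊢
      rwa [key a ha, key b hb, key c hc]
    · obtain ⟨z, hz, h⟩ := hne
      exact ⟨z, hz, h⟩
  exact hsub

lemma comp_trap {S : Set (ℤ × ℤ)} {s} (hs : s ∈ S) {Ψ : Plane → Plane} (hc : Continuous Ψ)
    (hΨ : ∀ z, 0 ≤ gf S z → 0 < gf S (Ψ z))
    (hne : ∃ z, 0 ≤ gf (comp S s) z ∧ 0 < gf (comp S s) (Ψ z)) :
    ∀ z, 0 ≤ gf (comp S s) z → 0 < gf (comp S s) (Ψ z) := by
  have hp := (Q_conn (comp_conn S s)).image Ψ hc.continuousOn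
  have := comp_clopen hs hp ?_ ?_
  · intro z hz
    exact this _ ⟨z, hz, rfl⟩
  · rintro _ ⟨z, hz, rfl⟩
    exact hΨ z (le_trans hz (gf_mono (comp_sub hs) z))
  · obtain ⟨z, h1, h2⟩ := hne
    exact ⟨_, ⟨z, h1, rfl⟩, h2⟩

lemma Bary.near {z a b c α β γ} (h : Bary z a b c α β γ) : dist (vec a) z ≤ 1 := by
  obtain ⟨⟨hA, hc⟩, h1, h2, h3, hs, hx, hy⟩ := h
  have b1 : |((b.1 - a.1 : ℤ) : ℝ)| ≤ 1 := by
    rw [← Int.cast_abs]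
    exact_mod_cast (by rw [abs_le]; unfold Adj at hA; omega : |b.1 - a.1| ≤ 1)
  have b2 : |((b.2 - a.2 : ℤ) : ℝ)| ≤ 1 := by
    rw [← Int.cast_abs]
    exact_mod_cast (by rw [abs_le]; unfold Adj at hA; omega : |b.2 - a.2| ≤ 1)
  have c1 : |((c.1 - a.1 : ℤ) : ℝ)| ≤ 1 := by
    rw [← Int.cast_abs]
    exact_mod_cast (by rw [abs_le, hc]; unfold Adj at hA; simp only [apex]; omega : |c.1 - a.1| ≤ 1)
  have c2 : |((c.2 - a.2 : ℤ) : ℝ)| ≤ 1 := by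
    rw [← Int.cast_abs]
    exact_mod_cast (by rw [abs_le, hc]; unfold Adj at hA; simp only [apex]; omega : |c.2 - a.2| ≤ 1)
  rw [abs_le] at b1 b2 c1 c2
  push_cast at b1 b2 c1 c2
  have hα : α = 1 - β - γ := by linarith
  rw [dist_comm, Prod.dist_eq, max_le_iff, Real.dist_eq, Real.dist_eq, abs_le, abs_le]
  simp only [vec]
  rw [hx, hy, hα]
  refine ⟨⟨?_, ?_⟩, ⟨?_, ?_⟩⟩ <;> nlinarith

lemma exists_comp {S : Set (ℤ × ℤ)} {z} (hz : 0 < gf S z) :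
    ∃ a ∈ S, 0 < gf (comp S a) z := by
  obtain ⟨a, b, c, α, β, γ, h⟩ := exists_bary z
  obtain ⟨a, b, c, α, β, γ, h, ha⟩ := exists_vertex h hz.le
  refine ⟨a, ha, ?_⟩
  rwa [gf_comp_eq h ha (mem_comp_self _ _)]

theorem lattice_select {ι : Type*} (Ψ : ι → Plane ≃ₜ Plane) (A B Em Ep : Set Plane)
    (hAB : ∀ a ∈ A, ∀ b ∈ B, 2 < dist a b) (hΨ : ∀ i, ∀ z ∉ B, Ψ i z ∈ A)
    (hEm : Em ⊆ A) (hEp : Ep ⊆ B) (cm : IsPreconnected Em) (cp : IsPreconnected Ep)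
    (nm : Em.Nonempty) (np : Ep.Nonempty)
    (hm : ∀ i, ∃ z ∈ Em, Ψ i z ∈ Em) (hp : ∀ i, ∃ z ∈ Ep, Ψ i z ∈ Ep) :
    ∃ S, SConn S ∧ SConn Sᶜ ∧ (∀ z ∈ Em, gf S z < 0) ∧ (∀ z ∈ Ep, 0 < gf S z) ∧
      ∀ i z, gf S z ≤ 0 → gf S (Ψ i z) < 0 := by
  set S0 : Set (ℤ × ℤ) := {v | ∃ a ∈ A, dist (vec v) a ≤ 1} with hS0
  have hA : ∀ z ∈ A, 0 < gf S0 z := by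
    intro z hz
    obtain ⟨a, b, c, α, β, γ, h⟩ := exists_bary z
    rw [h.gf, sg_mem (S := S0) ⟨z, hz, h.near⟩, sg_mem (S := S0) ⟨z, hz, h.rot.near⟩,
      sg_mem (S := S0) ⟨z, hz, h.rot.rot.near⟩]
    linarith [h.sum]
  have hB : ∀ z ∈ B, gf S0 z < 0 := by
    intro z hz
    by_contra hc
    push Not at hc
    obtain ⟨a, b, c, α, β, γ, h⟩ := exists_bary z
    obtain ⟨a, b, c, α, β, γ, h, x, hx, hd⟩ := exists_vertex h hc
    have h1 := hAB x hx z hz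
    have h2 := h.near
    have h3 := dist_triangle_left x z (vec a)
    linarith
  have t0 : ∀ i z, 0 ≤ gf S0 z → 0 < gf S0 (Ψ i z) := fun i z hz =>
    hA _ (hΨ i z (fun h => absurd (hB z h) (not_lt.2 hz)))
  obtain ⟨z0, hz0⟩ := nm
  obtain ⟨c0, hc0, hz0C⟩ := exists_comp (hA z0 (hEm hz0))
  set C := comp S0 c0 with hC
  have hEmC : ∀ z ∈ Em, 0 < gf C z :=
    comp_clopen hc0 cm (fun z hz => hA z (hEm hz)) ⟨z0, hz0, hz0C⟩
  have t1 : ∀ i z, 0 ≤ gf C z → 0 < gf C (Ψ i z) := by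
    intro i
    apply comp_trap hc0 (Ψ i).continuous (t0 i)
    obtain ⟨z, h1, h2⟩ := hm i
    exact ⟨z, (hEmC z h1).le, hEmC _ h2⟩
  have t2 : ∀ i z, 0 ≤ gf Cᶜ z → 0 < gf Cᶜ ((Ψ i).symm z) := by
    intro i z hz
    rw [gf_compl] at hz ⊢
    by_contra hc
    have := t1 i ((Ψ i).symm z) (by linarith)
    rw [(Ψ i).apply_symm_apply] at this
    linarith
  have hBC : ∀ z ∈ B, 0 < gf Cᶜ z := by
    intro z hz
    rw [gf_compl]
    have := gf_mono (comp_sub hc0) z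
    linarith [hB z hz]
  obtain ⟨z1, hz1⟩ := np
  obtain ⟨b0, hb0, hz1R⟩ := exists_comp (hBC z1 (hEp hz1))
  have hEpR : ∀ z ∈ Ep, 0 < gf (comp Cᶜ b0) z :=
    comp_clopen hb0 cp (fun z hz => hBC z (hEp hz)) ⟨z1, hz1, hz1R⟩
  have t3 : ∀ i z, 0 ≤ gf (comp Cᶜ b0) z → 0 < gf (comp Cᶜ b0) ((Ψ i).symm z) := by
    intro i
    apply comp_trap hb0 (Ψ i).symm.continuous (t2 i)
    obtain ⟨z, h1, h2⟩ := hp i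
    refine ⟨Ψ i z, (hEpR _ h2).le, ?_⟩
    rw [(Ψ i).symm_apply_apply]
    exact hEpR z h1
  refine ⟨comp Cᶜ b0, comp_conn _ _, compl_comp_conn (comp_conn _ _) (mem_comp_self _ _) hb0, ?_, hEpR, ?_⟩
  · intro z hz
    have h1 := hEmC z hz
    have h2 := gf_mono (comp_sub hb0) z
    rw [gf_compl] at h2
    linarith
  · intro i z hz
    by_contra hc
    have := t3 i (Ψ i z) (by linarith)
    rw [(Ψ i).symm_apply_apply] at this
    linarith


/-- mixed directed edges -/
def IsDart (S : Set (ℤ × ℤ)) (p : (ℤ × ℤ) × (ℤ × ℤ)) : Prop := Adj p.1 p.2 ∧ p.1 ∈ S ∧ p.2 ∉ S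

open Classical in
/-- next dart -/
def nx (S : Set (ℤ × ℤ)) (p : (ℤ × ℤ) × (ℤ × ℤ)) : (ℤ × ℤ) × (ℤ × ℤ) :=
  if apex p.1 p.2 ∈ S then (apex p.1 p.2, p.2) else (p.1, apex p.1 p.2)

open Classical in
/-- previous dart -/
def pv (S : Set (ℤ × ℤ)) (p : (ℤ × ℤ) × (ℤ × ℤ)) : (ℤ × ℤ) × (ℤ × ℤ) :=
  if apex' p.1 p.2 ∈ S then (apex' p.1 p.2, p.2) else (p.1, apex' p.1 p.2)

lemma nx_dart {S p} (h : IsDart S p) : IsDart S (nx S p) := by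
  obtain ⟨h1, h2, h3⟩ := h
  have h4 := tri_adj3 (adj_isTri h1)
  unfold nx
  split_ifs with hc
  · exact ⟨h4.2.1.symm, hc, h3⟩
  · exact ⟨h4.2.2.symm, h2, hc⟩

lemma pv_dart {S p} (h : IsDart S p) : IsDart S (pv S p) := by
  obtain ⟨⟨a, b⟩, ⟨c, d⟩⟩ := p
  obtain ⟨h1, h2, h3⟩ := h
  unfold pv
  split_ifs with hc
  · refine ⟨?_, hc, h3⟩
    simp only [Adj, apex'] at *; omega
  · refine ⟨?_, h2, hc⟩
    simp only [Adj, apex'] at *; omega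

lemma ap1 (a b) : apex' (apex a b) b = a := by
  ext <;> simp only [apex, apex'] <;> ring
lemma ap2 (a b) : apex' a (apex a b) = b := by
  ext <;> simp only [apex, apex'] <;> ring
lemma ap3 (a b) : apex (apex' a b) b = a := by
  ext <;> simp only [apex, apex'] <;> ring
lemma ap4 (a b) : apex a (apex' a b) = b := by
  ext <;> simp only [apex, apex'] <;> ring

lemma pv_nx {S p} (h : IsDart S p) : pv S (nx S p) = p := by
  obtain ⟨h1, h2, h3⟩ := h
  unfold nx
  split_ifs with hc
  · simp [pv, ap1, h2]
  · simp [pv, ap2, h3]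

lemma nx_pv {S p} (h : IsDart S p) : nx S (pv S p) = p := by
  obtain ⟨h1, h2, h3⟩ := h
  unfold pv
  split_ifs with hc
  · simp [nx, ap3, h2]
  · simp [nx, ap4, h3]

/-- the permutation of darts -/
def sig (S : Set (ℤ × ℤ)) : Equiv.Perm {p // IsDart S p} where
  toFun p := ⟨nx S p.1, nx_dart p.2⟩
  invFun p := ⟨pv S p.1, pv_dart p.2⟩
  left_inv p := Subtype.ext (pv_nx p.2)
  right_inv p := Subtype.ext (nx_pv p.2)

lemma int_sum (f : ℤ → ZMod 2) : ∃ F : ℤ → ZMod 2, F 0 = 0 ∧ ∀ n, F (n + 1) = F n + f n := by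
  refine ⟨fun n => match n with
    | Int.ofNat n => ∑ i ∈ Finset.range n, f i
    | Int.negSucc n => - ∑ i ∈ Finset.range (n + 1), f (Int.negSucc i), ?_, ?_⟩
  · rfl
  · rintro (n | n)
    · show ∑ i ∈ Finset.range (n + 1), f i = _
      rw [Finset.sum_range_succ]; rfl
    · rcases n with _ | n
      · show ∑ i ∈ Finset.range 0, f i = _
        simp
        exact (by decide : ∀ x : ZMod 2, 0 = x + x) _
      · show - ∑ i ∈ Finset.range (n + 1), f (Int.negSucc i) =
          - ∑ i ∈ Finset.range (n + 1 + 1), f (Int.negSucc i) + _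
        rw [Finset.sum_range_succ _ (n + 1)]
        ring

lemma coboundary (c : ℤ × ℤ → ℤ × ℤ → ZMod 2) (hs : ∀ a b, c a b = c b a)
    (ht : ∀ a b d, IsTri a b d → c a b + c b d + c d a = 0) :
    ∃ χ : ℤ × ℤ → ZMod 2, ∀ a b, Adj a b → χ b = χ a + c a b := by
  have two : ∀ x : ZMod 2, x + x = 0 := by decide
  obtain ⟨H, -, hH⟩ := int_sum (fun i => c (i, 0) (i + 1, 0))
  choose V hV0 hV using fun i => int_sum (fun j => c (i, j) (i, j + 1))
  have hup : ∀ i j : ℤ, c (i, j) (i + 1, j) + c (i + 1, j) (i, j + 1) + c (i, j + 1) (i, j) = 0 := by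
    intro i j
    apply ht
    simp [IsTri, Adj, apex]
  have hdn : ∀ i j : ℤ, c (i + 1, j + 1) (i, j + 1) + c (i, j + 1) (i + 1, j)
      + c (i + 1, j) (i + 1, j + 1) = 0 := by
    intro i j
    apply ht
    simp [IsTri, Adj, apex]
  have sq : ∀ i j : ℤ, c (i, j) (i + 1, j) + c (i + 1, j) (i + 1, j + 1) =
      c (i, j) (i, j + 1) + c (i, j + 1) (i + 1, j + 1) := by
    intro i j
    have h1 := hup i j
    have h2 := hdn i j
    rw [hs (i + 1, j + 1) (i, j + 1), hs (i, j + 1) (i + 1, j)] at h2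
    rw [hs (i, j + 1) (i, j)] at h1
    have e1 := two (c (i + 1, j) (i, j + 1))
    have e2 := two (c (i, j) (i, j + 1))
    have e3 := two (c (i, j + 1) (i + 1, j + 1))
    linear_combination h1 + h2 - e1 - e2 - e3
  have hhor : ∀ i j : ℤ, H (i + 1) + V (i + 1) j = H i + V i j + c (i, j) (i + 1, j) := by
    intro i j
    induction j using Int.induction_on with
    | zero => rw [hV0, hV0, hH]; ring
    | succ j ih =>
      rw [hV, hV]
      linear_combination ih + sq i j
    | pred j ih =>
      have h1 := hV (i + 1) (-(j : ℤ) - 1)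
      have h2 := hV i (-(j : ℤ) - 1)
      have h3 := sq i (-(j : ℤ) - 1)
      simp only [sub_add_cancel] at h1 h2 h3
      linear_combination ih - h1 + h2 - h3
  have hver : ∀ i j : ℤ, H i + V i (j + 1) = H i + V i j + c (i, j) (i, j + 1) := by
    intro i j; rw [hV]; ring
  have hdia : ∀ i j : ℤ, H i + V i (j + 1) = H (i + 1) + V (i + 1) j + c (i + 1, j) (i, j + 1) := by
    intro i j
    rw [hver, hhor]
    have h1 := hup i j
    rw [hs (i, j + 1) (i, j)] at h1
    have e2 := two (c (i, j) (i, j + 1))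
    linear_combination e2 - h1
  have flip : ∀ x y z : ZMod 2, x = y + z → y = x + z := by decide
  refine ⟨fun v => H v.1 + V v.1 v.2, ?_⟩
  rintro ⟨a, b⟩ ⟨a', b'⟩ h
  simp only [Adj] at h
  rcases h with ⟨rfl, rfl⟩ | ⟨rfl, rfl⟩ | ⟨rfl, rfl⟩ | ⟨rfl, rfl⟩ | ⟨rfl, rfl⟩ | ⟨rfl, rfl⟩
  · exact hhor _ _
  · exact hver _ _
  · have := hdia (a - 1) b
    simpa only [sub_add_cancel] using this
  · have := flip _ _ _ (hhor (a - 1) b')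
    simp only [sub_add_cancel] at this
    rw [hs]; exact this
  · have := flip _ _ _ (hver a' (b - 1))
    simp only [sub_add_cancel] at this
    rw [hs]; exact this
  · have := flip _ _ _ (hdia a (b - 1))
    simp only [sub_add_cancel] at this
    rw [hs]; exact this

lemma single_orbit {S : Set (ℤ × ℤ)} (hS : SConn S) (hSc : SConn Sᶜ) (d0 d1 : {p // IsDart S p}) :
    ∃ n : ℤ, (sig S ^ n) d0 = d1 := by
  classical
  set CC : Set ((ℤ × ℤ) × (ℤ × ℤ)) := {p | ∃ n : ℤ, ((sig S ^ n) d0).1 = p} with hCC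
  have hd : ∀ p ∈ CC, IsDart S p := by
    rintro _ ⟨n, rfl⟩; exact Subtype.property _
  have hnx : ∀ p, IsDart S p → (nx S p ∈ CC ↔ p ∈ CC) := by
    intro p hp
    constructor
    · rintro ⟨n, hn⟩
      refine ⟨n - 1, ?_⟩
      have : (sig S ^ n) d0 = sig S ⟨p, hp⟩ := Subtype.ext hn
      rw [sub_eq_neg_add, zpow_add, Equiv.Perm.mul_apply, this, zpow_neg_one]
      show ((sig S).symm (sig S ⟨p, hp⟩)).1 = p
      rw [Equiv.symm_apply_apply]
    · rintro ⟨n, hn⟩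
      refine ⟨n + 1, ?_⟩
      have : (sig S ^ n) d0 = ⟨p, hp⟩ := Subtype.ext hn
      rw [add_comm, zpow_add, Equiv.Perm.mul_apply, this, zpow_one]
      rfl
  set c : ℤ × ℤ → ℤ × ℤ → ZMod 2 := fun a b => if (a, b) ∈ CC ∨ (b, a) ∈ CC then 1 else 0 with hc
  have hs : ∀ a b, c a b = c b a := by
    intro a b; simp only [hc, or_comm]
  have h0 : ∀ a b, (a ∈ S ↔ b ∈ S) → c a b = 0 := by
    intro a b h
    simp only [hc]
    rw [if_neg]
    rintro (h1 | h1)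
    · have := hd _ h1; exact this.2.2 (h.1 this.2.1)
    · have := hd _ h1; exact this.2.2 (h.2 this.2.1)
  have hval : ∀ a b, a ∈ S → b ∉ S → c a b = if (a, b) ∈ CC then 1 else 0 := by
    intro a b ha hb
    simp only [hc]
    have : (b, a) ∉ CC := fun h => hb (hd _ h).2.1
    simp [this]
  have two : ∀ x : ZMod 2, x + x = 0 := by decide
  have htri0 : ∀ a b d, IsTri a b d → a ∈ S → b ∉ S → c a b + c b d + c d a = 0 := by
    intro a b d ht ha hb
    have hD : IsDart S (a, b) := ⟨ht.1, ha, hb⟩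
    have hn := hnx _ hD
    obtain ⟨h1, rfl⟩ := ht
    by_cases hd' : apex a b ∈ S
    · rw [h0 (apex a b) a (by simp [hd', ha]), hs b, hval _ _ ha hb, hval _ _ hd' hb]
      simp only [nx, hd', if_true] at hn
      simp only [hn]
      rw [two, add_zero]
    · rw [h0 b (apex a b) (by simp [hd', hb]), hs _ a, hval _ _ ha hb, hval _ _ ha hd']
      simp only [nx, hd', if_false] at hn
      simp only [hn]
      rw [add_zero, two]
  have htri : ∀ a b d, IsTri a b d → c a b + c b d + c d a = 0 := by
    intro a b d ht
    by_cases h1 : a ∈ S ∧ b ∉ S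
    · exact htri0 a b d ht h1.1 h1.2
    by_cases h2 : b ∈ S ∧ d ∉ S
    · have := htri0 b d a ht.rot h2.1 h2.2
      linear_combination this
    by_cases h3 : d ∈ S ∧ a ∉ S
    · have := htri0 d a b ht.rot.rot h3.1 h3.2
      linear_combination this
    rw [h0 a b (by tauto), h0 b d (by tauto), h0 d a (by tauto)]; simp
  obtain ⟨χ, hχ⟩ := coboundary c hs htri
  have const : ∀ S' : Set (ℤ × ℤ), (∀ a b, a ∈ S' → b ∈ S' → c a b = 0) → SConn S' →
      ∀ a ∈ S', ∀ b ∈ S', χ a = χ b := by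
    intro S' h h' a ha b hb
    have hr := h' a ha b hb
    clear hb
    induction hr with
    | refl => rfl
    | tail _ hr ih => rw [ih, hχ _ _ hr.1, h _ _ hr.2.1 hr.2.2, add_zero]
  have k1 := const S (fun a b ha hb => h0 a b (by simp [ha, hb])) hS
  have k2 := const Sᶜ (fun a b ha hb => h0 a b (by
    simp only [Set.mem_compl_iff] at ha hb; simp [ha, hb])) hSc
  have e0 := hχ _ _ d0.2.1
  have e1 := hχ _ _ d1.2.1
  rw [k1 _ d1.2.2.1 _ d0.2.2.1, k2 _ d1.2.2.2 _ d0.2.2.2, e0] at e1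
  have e2 := add_left_cancel e1
  rw [hval _ _ d0.2.2.1 d0.2.2.2, hval _ _ d1.2.2.1 d1.2.2.2, if_pos ⟨0, rfl⟩] at e2
  by_cases h : (d1.1.1, d1.1.2) ∈ CC
  · obtain ⟨n, hn⟩ := h
    exact ⟨n, Subtype.ext hn⟩
  · rw [if_neg h] at e2
    exact absurd e2 (by decide)


/-- midpoint of a dart -/
def mid (p : (ℤ × ℤ) × (ℤ × ℤ)) : Plane :=
  (((p.1.1 : ℝ) + p.2.1) / 2, ((p.1.2 : ℝ) + p.2.2) / 2)

/-- piecewise linear interpolation -/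
def pl (m : ℤ → Plane) (t : ℝ) : Plane :=
  ((1 - Int.fract t) • m ⌊t⌋ + Int.fract t • m (⌊t⌋ + 1))

lemma pl_eval (m : ℤ → Plane) (n : ℤ) {s : ℝ} (h0 : 0 ≤ s) (h1 : s ≤ 1) :
    pl m (n + s) = (1 - s) • m n + s • m (n + 1) := by
  rcases h1.lt_or_eq with h | rfl
  · have hf : ⌊(n : ℝ) + s⌋ = n := by
      rw [Int.floor_eq_iff]; constructor <;> linarith
    have hs : Int.fract ((n : ℝ) + s) = s := by
      unfold Int.fract; rw [hf]; ring
    unfold pl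
    rw [hf, hs]
  · have hf : ⌊(n : ℝ) + 1⌋ = n + 1 := by simp
    have hs : Int.fract ((n : ℝ) + 1) = 0 := by
      unfold Int.fract; rw [hf]; push_cast; ring
    unfold pl
    rw [hf, hs]; simp

lemma pl_cont (m : ℤ → Plane) : Continuous (pl m) := by
  have hlf : LocallyFinite (fun n : ℤ => Set.Icc (n : ℝ) (n + 1)) := by
    intro x
    refine ⟨Set.Ioo (x - 1) (x + 1), Ioo_mem_nhds (by linarith) (by linarith), ?_⟩
    apply (Set.finite_Icc (⌊x - 3⌋) (⌈x + 3⌉)).subset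
    rintro n ⟨y, ⟨h1, h2⟩, ⟨h3, h4⟩⟩
    constructor
    · have := Int.floor_le (x - 3)
      have : ((⌊x - 3⌋ : ℤ) : ℝ) ≤ (n : ℝ) := by linarith
      exact_mod_cast this
    · have := Int.le_ceil (x + 3)
      have : (n : ℝ) ≤ ((⌈x + 3⌉ : ℤ) : ℝ) := by linarith
      exact_mod_cast this
  refine hlf.continuous ?_ (fun n => isClosed_Icc) ?_
  · apply Set.eq_univ_of_forall
    intro x
    exact Set.mem_iUnion.2 ⟨⌊x⌋, Int.floor_le x, (Int.lt_floor_add_one x).le⟩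
  · intro n
    have : ContinuousOn (fun t : ℝ => (1 - (t - n)) • m n + (t - n) • m (n + 1))
        (Set.Icc (n : ℝ) (n + 1)) := by fun_prop
    apply this.congr
    intro t ht
    have := pl_eval m n (s := t - n) (by linarith [ht.1]) (by linarith [ht.2])
    show pl m t = (1 - (t - n)) • m n + (t - n) • m (n + 1)
    rw [← this]; congr 1; ring

lemma dart_bary {S : Set (ℤ × ℤ)} {p} (hp : IsDart S p) {s : ℝ} (h0 : 0 ≤ s) (h1 : s ≤ 1) :
    ∃ α β : ℝ, Bary ((1 - s) • mid p + s • mid (nx S p)) p.1 p.2 (apex p.1 p.2) α β (s / 2) ∧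
      (s < 1 → 0 < α ∧ 0 < β) ∧
      ((apex p.1 p.2 ∈ S ∧ α = (1 - s) / 2 ∧ β = 1 / 2) ∨
        (apex p.1 p.2 ∉ S ∧ α = 1 / 2 ∧ β = (1 - s) / 2)) := by
  by_cases hc : apex p.1 p.2 ∈ S
  · refine ⟨(1 - s) / 2, 1 / 2, ⟨adj_isTri hp.1, by linarith, by norm_num, by linarith, by ring, ?_, ?_⟩,
      fun h => ⟨by linarith, by norm_num⟩, Or.inl ⟨hc, rfl, rfl⟩⟩
    · simp [nx, hc, mid]; ring
    · simp [nx, hc, mid]; ring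
  · refine ⟨1 / 2, (1 - s) / 2, ⟨adj_isTri hp.1, by norm_num, by linarith, by linarith, by ring, ?_, ?_⟩,
      fun h => ⟨by norm_num, by linarith⟩, Or.inr ⟨hc, rfl, rfl⟩⟩
    · simp [nx, hc, mid]; ring
    · simp [nx, hc, mid]; ring

lemma tri_flip {a b c : ℤ × ℤ} (h : IsTri a b c) (h' : IsTri c b a) : False := by
  obtain ⟨a1, a2⟩ := a; obtain ⟨b1, b2⟩ := b; obtain ⟨c1, c2⟩ := c
  simp only [IsTri, Adj, apex, Prod.mk.injEq] at *; omega

lemma Bary.vertex {z a b c α β γ} (h : Bary z a b c α β γ) {v} (hv : _root_.wt v z ≠ 0) :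
    v = a ∨ v = b ∨ v = c := by
  by_contra hc
  push Not at hc
  apply hv
  rw [h.wt, if_neg hc.1, if_neg hc.2.1, if_neg hc.2.2]; simp

lemma Bary.wt_a {z a b c α β γ} (h : Bary z a b c α β γ) : _root_.wt a z = α := by
  rw [h.wt, if_pos rfl, if_neg h.tri.ne.1, if_neg h.tri.ne.2.2.symm]; simp

lemma dart_inj {S : Set (ℤ × ℤ)} {p p'} (hp : IsDart S p) (hp' : IsDart S p') {s s' : ℝ}
    (h0 : 0 ≤ s) (h1 : s < 1) (h0' : 0 ≤ s') (h1' : s' < 1)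
    (he : (1 - s) • mid p + s • mid (nx S p) = (1 - s') • mid p' + s' • mid (nx S p')) :
    p = p' ∧ s = s' := by
  obtain ⟨α, β, hB, hpos, -⟩ := dart_bary hp h0 h1.le
  obtain ⟨α', β', hB', hpos', -⟩ := dart_bary hp' h0' h1'.le
  rw [← he] at hB'
  obtain ⟨q1, q2⟩ := hpos h1
  obtain ⟨q1', q2'⟩ := hpos' h1'
  obtain ⟨a, b⟩ := p
  obtain ⟨a', b'⟩ := p'
  obtain ⟨hA, ha, hb⟩ := hp
  obtain ⟨hA', ha', hb'⟩ := hp'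
  simp only at *
  have v1 := hB'.vertex (v := a) (by rw [hB.wt_a]; exact q1.ne')
  have v2 := hB'.vertex (v := b) (by rw [hB.rot.wt_a]; exact q2.ne')
  have v1' := hB.vertex (v := a') (by rw [hB'.wt_a]; exact q1'.ne')
  have v2' := hB.vertex (v := b') (by rw [hB'.rot.wt_a]; exact q2'.ne')
  have n1 : a ≠ b' := fun h => hb' (h ▸ ha)
  have n2 : b ≠ a' := fun h => hb (h ▸ ha')
  have hab : a ≠ b := fun h => hb (h ▸ ha)
  have t := hB.tri
  have t' := hB'.tri
  have key : a = a' ∧ b = b' := by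
    rcases v1 with v1 | v1 | v1
    · refine ⟨v1, ?_⟩
      rcases v2 with v2 | v2 | v2
      · exact absurd v2 n2
      · exact v2
      · exfalso
        rcases v2' with v | v | v
        · exact n1 v.symm
        · exact t'.ne.2.1 (v.trans v2)
        · rw [← v2, ← v1, v] at t'
          exact tri_flip t.rot.rot t'.rot.rot
    · exact absurd v1 n1
    · exfalso
      rcases v2 with v2 | v2 | v2
      · exact n2 v2
      · rcases v1' with v | v | v
        · exact t'.ne.2.2 (v1.symm.trans v.symm)
        · exact n2 v.symm
        · rw [← v1, ← v2, v] at t'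
          exact tri_flip t t'
      · exact hab (v1.trans v2.symm)
  obtain ⟨rfl, rfl⟩ := key
  refine ⟨rfl, ?_⟩
  have e1 := hB.rot.rot.wt_a
  have e2 := hB'.rot.rot.wt_a
  linarith

theorem lattice_curve {S : Set (ℤ × ℤ)} (hS : SConn S) (hSc : SConn Sᶜ)
    (hinf : ∀ r : ℝ, ∃ z, r < ‖z‖ ∧ gf S z = 0) :
    ∃ Γ : ℝ → Plane, Continuous Γ ∧ Function.Injective Γ ∧ Set.range Γ = {z | gf S z = 0} ∧
      Tendsto Γ (cocompact ℝ) (cocompact Plane) := by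
  have zero_dart : ∀ z, gf S z = 0 → ∃ p, IsDart S p ∧ ∃ s : ℝ, 0 ≤ s ∧ s ≤ 1 ∧
      z = (1 - s) • mid p + s • mid (nx S p) := by
    intro z hz
    have aux : ∀ a b c α β γ, Bary z a b c α β γ → a ∈ S → b ∉ S → ∃ p, IsDart S p ∧ ∃ s : ℝ,
        0 ≤ s ∧ s ≤ 1 ∧ z = (1 - s) • mid p + s • mid (nx S p) := by
      intro a b c α β γ hB ha hb
      have hD : IsDart S (a, b) := ⟨hB.tri.1, ha, hb⟩
      refine ⟨(a, b), hD, 2 * γ, by linarith [hB.hc], ?_, ?_⟩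
      · have := hB.gf S
        rw [hz, sg_mem ha, sg_not hb] at this
        by_cases hc : c ∈ S
        · rw [sg_mem hc] at this; linarith [hB.sum, hB.ha]
        · rw [sg_not hc] at this; linarith [hB.sum, hB.hb]
      · have hg := hB.gf S
        rw [hz, sg_mem ha, sg_not hb] at hg
        have hs := hB.sum
        have hcc : c = apex a b := hB.tri.2
        by_cases hc : c ∈ S
        · rw [sg_mem hc] at hg
          have e1 : β = 1 / 2 := by linarith
          have e2 : α = 1 / 2 - γ := by linarith
          rw [hcc] at hc
          ext
          · rw [hB.fst, e1, e2]; simp [nx, hc, mid, hcc]; ring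
          · rw [hB.snd, e1, e2]; simp [nx, hc, mid, hcc]; ring
        · rw [sg_not hc] at hg
          have e1 : α = 1 / 2 := by linarith
          have e2 : β = 1 / 2 - γ := by linarith
          rw [hcc] at hc
          ext
          · rw [hB.fst, e1, e2]; simp [nx, hc, mid, hcc]; ring
          · rw [hB.snd, e1, e2]; simp [nx, hc, mid, hcc]; ring
    obtain ⟨a, b, c, α, β, γ, hB⟩ := exists_bary z
    by_cases h1 : a ∈ S ∧ b ∉ S
    · exact aux _ _ _ _ _ _ hB h1.1 h1.2
    by_cases h2 : b ∈ S ∧ c ∉ S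
    · exact aux _ _ _ _ _ _ hB.rot h2.1 h2.2
    by_cases h3 : c ∈ S ∧ a ∉ S
    · exact aux _ _ _ _ _ _ hB.rot.rot h3.1 h3.2
    exfalso
    rw [hB.gf] at hz
    by_cases ha : a ∈ S
    · rw [sg_mem ha, sg_mem (by tauto : b ∈ S), sg_mem (by tauto : c ∈ S)] at hz
      linarith [hB.sum]
    · rw [sg_not ha, sg_not (by tauto : b ∉ S), sg_not (by tauto : c ∉ S)] at hz
      linarith [hB.sum]
  have near : ∀ p, IsDart S p → ∀ s : ℝ, 0 ≤ s → s ≤ 1 →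
      dist (vec p.1) ((1 - s) • mid p + s • mid (nx S p)) ≤ 1 ∧
      dist (vec p.2) ((1 - s) • mid p + s • mid (nx S p)) ≤ 1 := by
    intro p hp s h0 h1
    obtain ⟨α, β, hB, -⟩ := dart_bary hp h0 h1
    exact ⟨hB.near, hB.rot.near⟩
  have dinf : Infinite {p // IsDart S p} := by
    by_contra hf
    rw [not_infinite_iff_finite] at hf
    obtain ⟨M, hM⟩ := (Set.finite_range (fun p : {p // IsDart S p} => ‖vec p.1.1‖)).bddAbove
    obtain ⟨z, hz, hz0⟩ := hinf (M + 1)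
    obtain ⟨p, hp, s, h0, h1, rfl⟩ := zero_dart z hz0
    have h2 := (near p hp s h0 h1).1
    have h3 : ‖vec p.1‖ ≤ M := hM ⟨⟨p, hp⟩, rfl⟩
    rw [dist_eq_norm] at h2
    have h4 := norm_sub_norm_le ((1 - s) • mid p + s • mid (nx S p)) (vec p.1)
    rw [norm_sub_rev] at h4
    linarith
  obtain ⟨d0⟩ : Nonempty {p // IsDart S p} := inferInstance
  set e : ℤ → {p // IsDart S p} := fun n => (sig S ^ n) d0 with he
  have esurj : Function.Surjective e := fun d => single_orbit hS hSc d0 d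
  have esucc : ∀ n, (e (n + 1)).1 = nx S (e n).1 := by
    intro n
    simp only [he]
    rw [add_comm, zpow_add, Equiv.Perm.mul_apply, zpow_one]; rfl
  have einj : Function.Injective e := by
    have key : ∀ k : ℕ, 0 < k → (sig S ^ k) d0 ≠ d0 := by
      intro k hk hd
      have hz : ∀ n : ℤ, e n ∈ e '' (Set.Ico 0 (k : ℤ)) := by
        intro n
        refine ⟨n % k, ⟨Int.emod_nonneg _ (by omega), Int.emod_lt_of_pos _ (by omega)⟩, ?_⟩
        have h1 : n = n % k + k * (n / k) := (Int.emod_add_mul_ediv n k).symm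
        have h2 : ((sig S ^ (k : ℤ)) ^ (n / k)) d0 = d0 := by
          apply Function.IsFixedPt.perm_zpow
          rw [zpow_natCast]; exact hd
        simp only [he]
        conv_rhs => rw [h1, zpow_add, zpow_mul, Equiv.Perm.mul_apply, h2]
      have : (Set.univ : Set {p // IsDart S p}).Finite := by
        apply ((Set.finite_Ico 0 (k : ℤ)).image e).subset
        intro d _
        obtain ⟨n, rfl⟩ := esurj d
        exact hz n
      exact Set.infinite_univ this
    intro n m hnm
    by_contra hne
    wlog hlt : n < m generalizing n m
    · exact this hnm.symm (Ne.symm hne) (by omega)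
    apply key (m - n).toNat (by omega)
    have h1 : (sig S ^ n) ((sig S ^ ((m - n).toNat)) d0) = (sig S ^ n) d0 := by
      rw [← zpow_natCast, ← Equiv.Perm.mul_apply, ← zpow_add,
        show n + ((m - n).toNat : ℤ) = m by omega]
      exact hnm.symm
    exact (sig S ^ n).injective h1
  set Γ := pl (fun n => mid (e n).1) with hΓ
  have heval : ∀ (n : ℤ) (s : ℝ), 0 ≤ s → s ≤ 1 →
      Γ (n + s) = (1 - s) • mid (e n).1 + s • mid (nx S (e n).1) := by
    intro n s h0 h1
    rw [hΓ, pl_eval _ n h0 h1, esucc]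
  have heval' : ∀ t : ℝ,
      Γ t = (1 - Int.fract t) • mid (e ⌊t⌋).1 + Int.fract t • mid (nx S (e ⌊t⌋).1) := by
    intro t
    rw [← heval _ _ (Int.fract_nonneg t) (Int.fract_lt_one t).le, Int.floor_add_fract]
  refine ⟨Γ, pl_cont _, ?_, ?_, ?_⟩
  · intro t t' h
    rw [heval', heval'] at h
    obtain ⟨h1, h2⟩ := dart_inj (e ⌊t⌋).2 (e ⌊t'⌋).2 (Int.fract_nonneg t) (Int.fract_lt_one t)
      (Int.fract_nonneg t') (Int.fract_lt_one t') h
    have h3 := einj (Subtype.ext h1)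
    rw [← Int.floor_add_fract t, ← Int.floor_add_fract t', h2, h3]
  · apply Set.Subset.antisymm
    · rintro _ ⟨t, rfl⟩
      show gf S (Γ t) = 0
      rw [heval']
      have hp := (e ⌊t⌋).2
      obtain ⟨α, β, hB, -, h⟩ := dart_bary hp (Int.fract_nonneg t) (Int.fract_lt_one t).le
      rw [hB.gf, sg_mem hp.2.1, sg_not hp.2.2]
      rcases h with ⟨hc, rfl, rfl⟩ | ⟨hc, rfl, rfl⟩
      · rw [sg_mem hc]; ring
      · rw [sg_not hc]; ring
    · intro z hz
      obtain ⟨p, hp, s, h0, h1, rfl⟩ := zero_dart z hz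
      obtain ⟨n, hn⟩ := esurj ⟨p, hp⟩
      refine ⟨n + s, ?_⟩
      rw [heval n s h0 h1, hn]
  · rw [← Metric.cobounded_eq_cocompact (α := Plane), ← comap_norm_atTop, tendsto_comap_iff, tendsto_atTop]
    intro r
    have hfin : {n : ℤ | ‖vec (e n).1.1‖ ≤ r + 1 ∧ ‖vec (e n).1.2‖ ≤ r + 1}.Finite := by
      have hL := (finite_near 0 (r + 2))
      apply Set.Finite.of_finite_image _ (f := fun n => (e n).1) (Subtype.val_injective.comp einj).injOn
      apply (hL.prod hL).subset
      rintro _ ⟨n, ⟨h1, h2⟩, rfl⟩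
      rw [Prod.norm_def, max_le_iff, Real.norm_eq_abs, Real.norm_eq_abs] at h1 h2
      simp only [vec] at h1 h2
      simp only [Set.mem_prod, Set.mem_setOf_eq, Prod.fst_zero, Prod.snd_zero, zero_sub, abs_neg]
      refine ⟨⟨?_, ?_⟩, ⟨?_, ?_⟩⟩ <;> linarith
    have hK : IsCompact (⋃ n ∈ {n : ℤ | ‖vec (e n).1.1‖ ≤ r + 1 ∧ ‖vec (e n).1.2‖ ≤ r + 1},
        Set.Icc (n : ℝ) (n + 1)) := hfin.isCompact_biUnion (fun n _ => isCompact_Icc)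
    filter_upwards [hK.compl_mem_cocompact] with t ht
    by_contra hc
    apply ht
    simp only [Function.comp, not_le] at hc
    rw [heval'] at hc
    obtain ⟨h1, h2⟩ := near _ (e ⌊t⌋).2 _ (Int.fract_nonneg t) (Int.fract_lt_one t).le
    refine Set.mem_biUnion (x := ⌊t⌋) ⟨?_, ?_⟩ ⟨Int.floor_le t, (Int.lt_floor_add_one t).le⟩
    · rw [dist_eq_norm] at h1
      have := norm_sub_norm_le (vec (e ⌊t⌋).1.1)
        ((1 - Int.fract t) • mid (e ⌊t⌋).1 + Int.fract t • mid (nx S (e ⌊t⌋).1))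
      linarith
    · rw [dist_eq_norm] at h2
      have := norm_sub_norm_le (vec (e ⌊t⌋).1.2)
        ((1 - Int.fract t) • mid (e ⌊t⌋).1 + Int.fract t • mid (nx S (e ⌊t⌋).1))
      linarith


lemma radial {A B : Set Plane} (cA : IsClosed A) (cB : IsClosed B) (hd : Disjoint A B)
    (nA : A.Nonempty) (nB : B.Nonempty) :
    ∃ R : Plane ≃ₜ Plane, (∀ a ∈ A, ∀ b ∈ B, 2 < dist (R a) (R b)) ∧ ∀ z, ‖z‖ ≤ ‖R z‖ := by
  set h : Plane → ℝ := fun z => Metric.infDist z A + Metric.infDist z B with hh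
  have hpos : ∀ z, 0 < h z := by
    intro z
    by_cases hz : z ∈ A
    · have hz' : z ∉ B := fun h => Set.disjoint_left.1 hd hz h
      have := (cB.notMem_iff_infDist_pos nB).1 hz'
      have h2 := Metric.infDist_nonneg (x := z) (s := A)
      simp only [hh]; linarith
    · have := (cA.notMem_iff_infDist_pos nA).1 hz
      have h2 := Metric.infDist_nonneg (x := z) (s := B)
      simp only [hh]; linarith
  have hc : Continuous h := (Metric.continuous_infDist_pt A).add (Metric.continuous_infDist_pt B)
  set g : ℝ → Plane → ℝ := fun r v => 8 / h (r • v) with hg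
  have hgc : Continuous ↿g := by
    show Continuous (fun p : ℝ × Plane => 8 / h (p.1 • p.2))
    apply Continuous.div continuous_const (by fun_prop)
    intro x; exact (hpos _).ne'
  set κ : ℝ → ℝ := fun r => 1 + sSup (g r '' Metric.closedBall 0 1) with hκ
  have hK : IsCompact (Metric.closedBall (0 : Plane) 1) := isCompact_closedBall _ _
  have hκc : Continuous κ := continuous_const.add (hK.continuous_sSup hgc)
  have hbdd : ∀ r, BddAbove (g r '' Metric.closedBall 0 1) := fun r =>
    (hK.image (by fun_prop)).bddAbove
  have hκge : ∀ z : Plane, 1 + 8 / h z ≤ κ ‖z‖ := by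
    intro z
    simp only [hκ]
    gcongr
    apply le_csSup (hbdd _)
    by_cases hz : z = 0
    · exact ⟨0, by simp, by simp [hg, hz]⟩
    · have : ‖z‖ ≠ 0 := by simpa using hz
      refine ⟨‖z‖⁻¹ • z, ?_, ?_⟩
      · simp [norm_smul, this]
      · simp only [hg]; rw [smul_smul, mul_inv_cancel₀ this, one_smul]
  have hκ1 : ∀ z : Plane, 1 ≤ κ ‖z‖ := fun z => by
    have := hκge z
    have h2 : 0 < 8 / h z := by have := hpos z; positivity
    linarith
  have hmono : ∀ z w : Plane, ‖z‖ ≤ ‖w‖ → κ ‖z‖ ≤ κ ‖w‖ := by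
    intro z w hzw
    simp only [hκ]
    gcongr 1 + ?_
    apply csSup_le_csSup (hbdd _)
    · exact ⟨_, 0, by simp, rfl⟩
    · rintro _ ⟨v, hv, rfl⟩
      by_cases hw : ‖w‖ = 0
      · have : ‖z‖ = 0 := le_antisymm (hw ▸ hzw) (norm_nonneg _)
        exact ⟨v, hv, by rw [hw, this]⟩
      · refine ⟨(‖z‖ / ‖w‖) • v, ?_, ?_⟩
        · simp only [mem_closedBall_zero_iff] at hv ⊢
          rw [norm_smul, norm_div, norm_norm, norm_norm]
          have : ‖z‖ / ‖w‖ ≤ 1 := div_le_one_of_le₀ hzw (norm_nonneg _)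
          have h0 : 0 ≤ ‖z‖ / ‖w‖ := by positivity
          nlinarith [norm_nonneg v]
        · simp only [hg]; rw [smul_smul, mul_div_cancel₀ _ hw]
  set R : Plane → Plane := fun z => κ ‖z‖ • z with hR
  have key : ∀ z w : Plane, ‖z‖ ≤ ‖w‖ → κ ‖z‖ * dist z w ≤ 2 * dist (R z) (R w) := by
    intro z w hzw
    have h1 := hmono z w hzw
    have h0 := hκ1 z
    rw [dist_comm, dist_comm (R z), dist_eq_norm, dist_eq_norm]
    have e : R w - R z = κ ‖z‖ • (w - z) - (-((κ ‖w‖ - κ ‖z‖) • w)) := by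
      simp only [hR, sub_smul, smul_sub]; abel
    have i1 : κ ‖z‖ * ‖w - z‖ - (κ ‖w‖ - κ ‖z‖) * ‖w‖ ≤ ‖R w - R z‖ := by
      rw [e]
      refine le_trans (le_of_eq ?_) (norm_sub_norm_le _ _)
      rw [norm_neg, norm_smul, norm_smul, Real.norm_of_nonneg (by linarith),
        Real.norm_of_nonneg (by linarith)]
    have i2 : κ ‖w‖ * ‖w‖ - κ ‖z‖ * ‖z‖ ≤ ‖R w - R z‖ := by
      refine le_trans (le_of_eq ?_) (norm_sub_norm_le _ _)
      simp only [hR]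
      rw [norm_smul, norm_smul, Real.norm_of_nonneg (by linarith),
        Real.norm_of_nonneg (by linarith)]
    nlinarith
  have anti : AntilipschitzWith 2 R := by
    apply AntilipschitzWith.of_le_mul_dist
    intro z w
    push_cast
    rcases le_total ‖z‖ ‖w‖ with hzw | hzw
    · have := key z w hzw
      nlinarith [hκ1 z, dist_nonneg (x := z) (y := w)]
    · have := key w z hzw
      rw [dist_comm, dist_comm (R z)]
      nlinarith [hκ1 w, dist_nonneg (x := w) (y := z)]
  have hRc : Continuous R := by
    simp only [hR]; exact (hκc.comp continuous_norm).smul continuous_id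
  have surj : Function.Surjective R := by
    intro w
    have hcont : ContinuousOn (fun t : ℝ => κ ‖t • w‖ * t) (Set.Icc 0 1) := by fun_prop
    have := intermediate_value_Icc (zero_le_one' ℝ) hcont
    obtain ⟨t, -, ht⟩ := this (show (1 : ℝ) ∈ _ from ⟨by simp, by simpa using hκ1 w⟩)
    replace ht : κ ‖t • w‖ * t = 1 := ht
    refine ⟨t • w, ?_⟩
    simp only [hR]
    rw [smul_smul, ht, one_smul]
  let E := Equiv.ofBijective R ⟨anti.injective, surj⟩
  refine ⟨⟨E, hRc, ?_⟩, ?_, ?_⟩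
  · exact (anti.to_rightInverse (g := E.symm) E.apply_symm_apply).continuous
  · show ∀ a ∈ A, ∀ b ∈ B, 2 < dist (R a) (R b)
    intro a ha b hb
    have hha : h a ≤ dist a b := by
      simp only [hh]; rw [Metric.infDist_zero_of_mem ha, zero_add]
      exact Metric.infDist_le_dist_of_mem hb
    have hhb : h b ≤ dist b a := by
      simp only [hh]; rw [Metric.infDist_zero_of_mem hb, add_zero]
      exact Metric.infDist_le_dist_of_mem ha
    have gen : ∀ z w : Plane, ‖z‖ ≤ ‖w‖ → h z ≤ dist z w → 2 < dist (R z) (R w) := by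
      intro z w h1 h2
      have h3 := key z w h1
      have h4 := hκge z
      have h5 := hpos z
      have h6 : 8 / h z * h z = 8 := div_mul_cancel₀ _ h5.ne'
      have h7 : (8 / h z) * h z ≤ κ ‖z‖ * dist z w := by
        apply mul_le_mul _ h2 h5.le (by linarith [hκ1 z])
        linarith
      linarith
    rcases le_total ‖a‖ ‖b‖ with hab | hab
    · exact gen a b hab hha
    · rw [dist_comm]; exact gen b a hab hhb
  · intro z
    show ‖z‖ ≤ ‖R z‖
    simp only [hR]
    rw [norm_smul, Real.norm_of_nonneg (by linarith [hκ1 z])]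
    nlinarith [hκ1 z, norm_nonneg z]

lemma horiz_zero {G : Plane → ℝ} (hG : Continuous G) (y : ℝ) {x x' : ℝ}
    (h : G (x, y) < 0) (h' : 0 < G (x', y)) : ∃ x'', G (x'', y) = 0 := by
  have hc : Continuous (fun s : ℝ => G (s, y)) := by fun_prop
  exact mem_range_of_exists_le_of_exists_ge hc ⟨x, h.le⟩ ⟨x', h'.le⟩

theorem plane_curve {ι : Type*} (Ψ : ι → Plane ≃ₜ Plane) (A B Em Ep : Set Plane)
    (cA : IsClosed A) (cB : IsClosed B) (hd : Disjoint A B)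
    (hΨ : ∀ i, ∀ z ∉ B, Ψ i z ∈ A) (hEm : Em ⊆ A) (hEp : Ep ⊆ B)
    (cm : IsPreconnected Em) (cp : IsPreconnected Ep)
    (sm : ∀ y : ℝ, ∃ x : ℝ, (x, y) ∈ Em) (sp : ∀ y : ℝ, ∃ x : ℝ, (x, y) ∈ Ep)
    (hm : ∀ i, ∃ z ∈ Em, Ψ i z ∈ Em) (hp : ∀ i, ∃ z ∈ Ep, Ψ i z ∈ Ep) :
    ∃ (G : Plane → ℝ) (Γ : ℝ → Plane), Continuous G ∧ Continuous Γ ∧ Function.Injective Γ ∧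
      range Γ = {z | G z = 0} ∧ Tendsto Γ (cocompact ℝ) (cocompact Plane) ∧
      (∀ z ∈ Em, G z < 0) ∧ (∀ z ∈ Ep, 0 < G z) ∧ ∀ i z, G z ≤ 0 → G (Ψ i z) < 0 := by
  have nm : Em.Nonempty := (sm 0).imp' _ (fun _ h => h)
  have np : Ep.Nonempty := (sp 0).imp' _ (fun _ h => h)
  obtain ⟨R, hR, hRn⟩ := radial cA cB hd (nm.mono hEm) (np.mono hEp)
  obtain ⟨S, s1, s2, s3, s4, s5⟩ := lattice_select
    (fun i => (R.symm.trans (Ψ i)).trans R) (R '' A) (R '' B) (R '' Em) (R '' Ep)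
    (by rintro _ ⟨a, ha, rfl⟩ _ ⟨b, hb, rfl⟩; exact hR a ha b hb)
    (by
      intro i z hz
      refine ⟨Ψ i (R.symm z), hΨ i _ (fun h => hz ⟨_, h, by simp⟩), rfl⟩)
    (image_mono hEm) (image_mono hEp)
    (cm.image _ R.continuous.continuousOn) (cp.image _ R.continuous.continuousOn)
    (nm.image _) (np.image _)
    (by
      intro i
      obtain ⟨z, h1, h2⟩ := hm i
      exact ⟨R z, ⟨z, h1, rfl⟩, Ψ i z, h2, by simp⟩)
    (by
      intro i
      obtain ⟨z, h1, h2⟩ := hp i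
      exact ⟨R z, ⟨z, h1, rfl⟩, Ψ i z, h2, by simp⟩)
  have hGc : Continuous (fun z => gf S (R z)) := (gf_cont S).comp R.continuous
  obtain ⟨Γ, g1, g2, g3, g4⟩ := lattice_curve s1 s2 (by
    intro r
    obtain ⟨x, hx⟩ := sm (|r| + 1)
    obtain ⟨x', hx'⟩ := sp (|r| + 1)
    obtain ⟨x'', h⟩ := horiz_zero hGc (|r| + 1) (s3 _ ⟨_, hx, rfl⟩) (s4 _ ⟨_, hx', rfl⟩)
    refine ⟨R (x'', |r| + 1), lt_of_lt_of_le ?_ (hRn _), h⟩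
    have : ‖|r| + 1‖ ≤ ‖((x'', |r| + 1) : Plane)‖ := norm_snd_le ((x'', |r| + 1) : Plane)
    rw [Real.norm_of_nonneg (by positivity)] at this
    linarith [le_abs_self r])
  refine ⟨fun z => gf S (R z), R.symm ∘ Γ, hGc, R.symm.continuous.comp g1,
    R.symm.injective.comp g2, ?_, ?_, fun z hz => s3 _ ⟨z, hz, rfl⟩,
    fun z hz => s4 _ ⟨z, hz, rfl⟩, ?_⟩
  · ext z
    rw [range_comp, g3]
    constructor
    · rintro ⟨w, hw, rfl⟩
      simpa using hw
    · intro hz; exact ⟨R z, hz, by simp⟩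
  · exact R.symm.isClosedEmbedding.tendsto_cocompact.comp g4
  · intro i z hz
    have := s5 i (R z) hz
    simpa using this

theorem curve_ends {G : Plane → ℝ} {Γ : ℝ → Plane} (hG : Continuous G) (hΓ : Continuous Γ)
    (hi : Function.Injective Γ) (hr : range Γ = {z | G z = 0})
    (ht : Tendsto Γ (cocompact ℝ) (cocompact Plane))
    (hs : ∀ M : ℝ, ∃ X : ℝ, ∀ x y : ℝ, |y| ≤ M → (X ≤ x → 0 < G (x, y)) ∧ (x ≤ -X → G (x, y) < 0)) :
    ∃ Γ' : ℝ → Plane, Continuous Γ' ∧ Function.Injective Γ' ∧ range Γ' = {z | G z = 0} ∧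
      Tendsto (fun t => (Γ' t).2) atTop atTop ∧ Tendsto (fun t => (Γ' t).2) atBot atBot := by
  have hz : ∀ t, G (Γ t) = 0 := fun t => by
    have : Γ t ∈ range Γ := ⟨t, rfl⟩
    rwa [hr] at this
  have habs : Tendsto (fun t => |(Γ t).2|) (cocompact ℝ) atTop := by
    rw [tendsto_atTop]
    intro M
    obtain ⟨X, hX⟩ := hs M
    have hK : IsCompact (Set.Icc (-X) X ×ˢ Set.Icc (-M) M) := isCompact_Icc.prod isCompact_Icc
    filter_upwards [ht hK.compl_mem_cocompact] with t h
    by_contra hc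
    push Not at hc
    apply h
    have h2 := hX (Γ t).1 (Γ t).2 hc.le
    have h3 := hz t
    rw [abs_lt] at hc
    refine ⟨⟨?_, ?_⟩, ⟨hc.1.le, hc.2.le⟩⟩
    · by_contra h4; push Not at h4
      exact (h2.2 h4.le).ne h3
    · by_contra h4; push Not at h4
      exact (h2.1 h4.le).ne' h3
  have hline : ∀ y : ℝ, ∃ t, (Γ t).2 = y := by
    intro y
    obtain ⟨X, hX⟩ := hs |y|
    obtain ⟨x, h⟩ := horiz_zero hG y ((hX (-X) y le_rfl).2 le_rfl) ((hX X y le_rfl).1 le_rfl)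
    have : ((x, y) : Plane) ∈ range Γ := by rw [hr]; exact h
    obtain ⟨t, ht⟩ := this
    exact ⟨t, by rw [ht]⟩
  -- at each end the sign is constant
  have h2c : Continuous (fun t => (Γ t).2) := continuous_snd.comp hΓ
  have sgn : ∀ {s : Set ℝ}, IsPreconnected s → (∀ t ∈ s, 1 ≤ |(Γ t).2|) →
      (∀ t ∈ s, 0 < (Γ t).2) ∨ (∀ t ∈ s, (Γ t).2 < 0) := by
    intro s hs h1
    by_contra hc
    push Not at hc
    obtain ⟨⟨t, ht, h⟩, ⟨t', ht', h'⟩⟩ := hc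
    obtain ⟨u, hu, h0⟩ := hs.intermediate_value ht ht' h2c.continuousOn ⟨h, h'⟩
    have := h1 u hu
    simp only at h0
    rw [h0] at this; norm_num at this
  have top : Tendsto (fun t => (Γ t).2) atTop atTop ∨ Tendsto (fun t => (Γ t).2) atTop atBot := by
    have h1 := habs.mono_left (atTop_le_cocompact)
    obtain ⟨a, ha⟩ := (h1.eventually_ge_atTop 1).exists_forall_of_atTop
    rcases sgn (s := Set.Ici a) isPreconnected_Ici ha with h | h
    · left
      refine h1.congr' ?_
      filter_upwards [eventually_ge_atTop a] with t ht
      exact abs_of_pos (h t ht)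
    · right
      rw [← tendsto_neg_atTop_iff]
      refine h1.congr' ?_
      filter_upwards [eventually_ge_atTop a] with t ht
      exact abs_of_neg (h t ht)
  have bot : Tendsto (fun t => (Γ t).2) atBot atTop ∨ Tendsto (fun t => (Γ t).2) atBot atBot := by
    have h1 := habs.mono_left (atBot_le_cocompact)
    obtain ⟨a, ha⟩ := (h1.eventually_ge_atTop 1).exists_forall_of_atBot
    rcases sgn (s := Set.Iic a) isPreconnected_Iic ha with h | h
    · left
      refine h1.congr' ?_
      filter_upwards [eventually_le_atBot a] with t ht
      exact abs_of_pos (h t ht)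
    · right
      rw [← tendsto_neg_atTop_iff]
      refine h1.congr' ?_
      filter_upwards [eventually_le_atBot a] with t ht
      exact abs_of_neg (h t ht)
  have no1 : ¬ (Tendsto (fun t => (Γ t).2) atTop atTop ∧ Tendsto (fun t => (Γ t).2) atBot atTop) := by
    rintro ⟨h1, h2⟩
    have h3 : Tendsto (fun t => (Γ t).2) (cocompact ℝ) atTop := by
      rw [cocompact_eq_atBot_atTop]; exact h2.sup h1
    obtain ⟨t0, ht0⟩ := h2c.exists_forall_le h3
    obtain ⟨t, h⟩ := hline ((Γ t0).2 - 1)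
    have := ht0 t
    linarith
  have no2 : ¬ (Tendsto (fun t => (Γ t).2) atTop atBot ∧ Tendsto (fun t => (Γ t).2) atBot atBot) := by
    rintro ⟨h1, h2⟩
    have h3 : Tendsto (fun t => (Γ t).2) (cocompact ℝ) atBot := by
      rw [cocompact_eq_atBot_atTop]; exact h2.sup h1
    obtain ⟨t0, ht0⟩ := h2c.exists_forall_ge h3
    obtain ⟨t, h⟩ := hline ((Γ t0).2 + 1)
    have := ht0 t
    linarith
  rcases top with h1 | h1 <;> rcases bot with h2 | h2
  · exact absurd ⟨h1, h2⟩ no1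
  · exact ⟨Γ, hΓ, hi, hr, h1, h2⟩
  · refine ⟨fun t => Γ (-t), hΓ.comp continuous_neg, hi.comp neg_injective, ?_, ?_, ?_⟩
    · rw [← hr]
      exact neg_surjective.range_comp Γ
    · exact h2.comp tendsto_neg_atTop_atBot
    · exact h1.comp tendsto_neg_atBot_atTop
  · exact absurd ⟨h1, h2⟩ no2


lemma int_const {X : Type*} [TopologicalSpace X] [PreconnectedSpace X] {g : X → ℝ}
    (hg : Continuous g) (h : ∀ x, ∃ n : ℤ, g x = n) (x y : X) : g x = g y := by
  choose m hm using h
  have : Continuous m := by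
    rw [Int.isClosedEmbedding_coe_real.isInducing.continuous_iff]
    exact hg.congr hm
  rw [hm, hm, PreconnectedSpace.constant ‹_› this]

lemma circle_eq {x y : ℝ} (h : (x : AddCircle (1 : ℝ)) = (y : AddCircle (1 : ℝ))) :
    ∃ n : ℤ, x - y = n := by
  have : ((x - y : ℝ) : AddCircle (1 : ℝ)) = 0 := by
    rw [AddCircle.coe_sub, h, sub_self]
  obtain ⟨n, hn⟩ := (AddCircle.coe_eq_zero_iff _).1 this
  exact ⟨n, by rw [← hn]; simp⟩

lemma circle_add_one (x : ℝ) : ((x + 1 : ℝ) : AddCircle (1 : ℝ)) = (x : AddCircle (1 : ℝ)) :=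
  AddCircle.coe_add_period _ x

lemma circle_add_int (x : ℝ) (k : ℤ) :
    ((x + k : ℝ) : AddCircle (1 : ℝ)) = (x : AddCircle (1 : ℝ)) := by
  rw [AddCircle.coe_add]
  have : ((k : ℝ) : AddCircle (1 : ℝ)) = 0 := (AddCircle.coe_eq_zero_iff _).2 ⟨k, by simp⟩
  rw [this, add_zero]

lemma prj_cont : Continuous prj := by
  apply Continuous.prodMk
  · exact (AddCircle.continuous_mk' 1).comp continuous_fst
  · exact continuous_snd

lemma prj_Tr (k : ℤ) (z : Plane) : prj (Tr k z) = prj z := by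
  simp only [prj, Tr, circle_add_int]

lemma prj_eq {z w : Plane} (h : prj z = prj w) : ∃ k : ℤ, z = Tr k w := by
  simp only [prj, Prod.mk.injEq] at h
  obtain ⟨n, hn⟩ := circle_eq h.1
  exact ⟨n, Prod.ext (by simp only [Tr]; linarith) h.2⟩

theorem lift_comm {f : Ann ≃ₜ Ann} {F : Plane ≃ₜ Plane} (hiso : IsotopicToId f)
    (hlift : IsLift f F) (z : Plane) : F (Tr 1 z) = Tr 1 (F z) := by
  have h2 : ∀ z, (F (Tr 1 z)).2 = (F z).2 := by
    intro z
    have := hlift (Tr 1 z)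
    rw [prj_Tr, ← hlift z] at this
    exact (Prod.ext_iff.1 this).2
  have h1 : ∀ z, ∃ n : ℤ, (F (Tr 1 z)).1 - (F z).1 = n := by
    intro z
    have := hlift (Tr 1 z)
    rw [prj_Tr, ← hlift z] at this
    exact circle_eq (Prod.ext_iff.1 this).1
  have hTc : Continuous (Tr 1) := by unfold Tr; fun_prop
  have hc : ∀ z, (F (Tr 1 z)).1 - (F z).1 = (F (Tr 1 (0, 0))).1 - (F (0, 0)).1 := fun z =>
    int_const (g := fun z => (F (Tr 1 z)).1 - (F z).1) (by fun_prop) h1 z (0, 0)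
  obtain ⟨H, Hc, -, H0, H1⟩ := hiso
  let φ : C(ℝ × ℝ, AddCircle (1 : ℝ)) :=
    ⟨fun s => (H s.1 (prj (s.2, 0))).1, by
      have h := prj_cont
      have : Continuous (fun s : ℝ × ℝ => ((s.1, prj (s.2, 0)) : ℝ × Ann)) := by fun_prop
      exact continuous_fst.comp (Hc.comp this)⟩
  have : LocallyPathConnectedSpace (ℝ × ℝ) := inferInstance
  obtain ⟨L, ⟨hL0, hL⟩, -⟩ := (AddCircle.isCoveringMap_coe (1 : ℝ)).existsUnique_continuousMap_lifts
    φ (0, 0) (0 : ℝ) (by show _ = (H 0 (prj (0, 0))).1; rw [H0]; rfl)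
  have hL' : ∀ t s : ℝ, ((L (t, s) : ℝ) : AddCircle (1 : ℝ)) = (H t (prj (s, 0))).1 := fun t s =>
    congrFun hL (t, s)
  have e1 : L (1, 1) - L (1, 0) = L (0, 1) - L (0, 0) := by
    refine int_const (g := fun t : ℝ => L (t, 1) - L (t, 0)) (by fun_prop) ?_ 1 0
    intro t
    apply circle_eq
    rw [hL', hL']
    congr 2
    have := prj_Tr 1 (0, 0)
    simpa [Tr] using this
  have e2 : L (0, 1) - 1 = L (0, 0) - 0 := by
    refine int_const (g := fun t : ℝ => L (0, t) - t) (by fun_prop) ?_ 1 0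
    intro t
    apply circle_eq
    rw [hL', H0]; rfl
  have e3 : L (1, 1) - (F (1, 0)).1 = L (1, 0) - (F (0, 0)).1 := by
    refine int_const (g := fun t : ℝ => L (1, t) - (F (t, 0)).1) (by fun_prop) ?_ 1 0
    intro t
    apply circle_eq
    rw [hL', H1, ← hlift]; rfl
  have e4 : (F (Tr 1 (0, 0))).1 = (F (1, 0)).1 := by
    congr 2; simp [Tr]
  have e5 := hc z
  rw [e4] at e5
  apply Prod.ext
  · simp only [Tr] at e5 ⊢
    push_cast at e5 ⊢
    linarith
  · rw [h2]; rfl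


/-- proper action of the monoid ℕ² -/
structure PAct (P : ℕ × ℕ → (Plane ≃ₜ Plane)) : Prop where
  zero : P 0 = 1
  add : ∀ m n, P (m + n) = P m * P n
  prop : ∀ K : Set Plane, IsCompact K → {n | ∃ z ∈ K, P n z ∈ K}.Finite

def bmp (i : ℕ) (z : Plane) : ℝ := max 0 ((i : ℝ) + 1 - ‖z‖)

lemma bmp_nonneg (i z) : 0 ≤ bmp i z := le_max_left _ _
lemma bmp_cont (i) : Continuous (bmp i) := by unfold bmp; fun_prop
lemma bmp_ne {i z} (h : bmp i z ≠ 0) : z ∈ Metric.closedBall (0 : Plane) (i + 1) := by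
  rw [mem_closedBall_zero_iff]
  by_contra hc
  push Not at hc
  exact h (max_eq_left (by linarith))
lemma bmp_pos (z) : ∃ i, 0 < bmp i z := by
  obtain ⟨i, hi⟩ := exists_nat_gt ‖z‖
  exact ⟨i, lt_max_of_lt_right (by linarith)⟩

def sfn (P : ℕ × ℕ → (Plane ≃ₜ Plane)) (i : ℕ) (z : Plane) : ℝ := ∑ᶠ n, bmp i (P n z)

lemma PAct.fin {P} (hP : PAct P) (i : ℕ) {K : Set Plane} (hK : IsCompact K) :
    {n | ∃ z ∈ K, bmp i (P n z) ≠ 0}.Finite := by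
  apply (hP.prop (K ∪ Metric.closedBall 0 (i + 1)) (hK.union (isCompact_closedBall _ _))).subset
  rintro n ⟨z, hz, h⟩
  exact ⟨z, Or.inl hz, Or.inr (bmp_ne h)⟩

lemma PAct.fin1 {P} (hP : PAct P) (i : ℕ) (z) :
    (Function.support (fun n => bmp i (P n z))).Finite := by
  apply (hP.fin i (isCompact_singleton (x := z))).subset
  intro n hn
  exact ⟨z, rfl, hn⟩

lemma PAct.s_cont {P} (hP : PAct P) (i : ℕ) : Continuous (sfn P i) := by
  apply continuous_finsum
  · intro n; exact (bmp_cont i).comp (P n).continuous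
  · intro z
    refine ⟨Metric.closedBall z 1, Metric.closedBall_mem_nhds _ one_pos, ?_⟩
    apply (hP.fin i (isCompact_closedBall z 1)).subset
    rintro n ⟨w, h1, h2⟩
    exact ⟨w, h2, h1⟩

lemma sum_le_finsum {α : Type*} {f : α → ℝ} (h0 : ∀ x, 0 ≤ f x)
    (hf : (Function.support f).Finite) (A : Finset α) : ∑ x ∈ A, f x ≤ ∑ᶠ x, f x := by
  classical
  rw [finsum_eq_sum_of_support_subset f (s := A ∪ hf.toFinset) (by intro x hx; simp [hx])]
  apply Finset.sum_le_sum_of_subset_of_nonneg Finset.subset_union_left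
  intros; exact h0 _

lemma sfn_nonneg (P i z) : 0 ≤ sfn P i z := finsum_nonneg (fun _ => bmp_nonneg _ _)

lemma PAct.s_dec {P} (hP : PAct P) (i : ℕ) {m : ℕ × ℕ} (hm : m ≠ 0) (z) :
    sfn P i (P m z) + bmp i z ≤ sfn P i z := by
  classical
  have h1 : sfn P i (P m z) = ∑ k ∈ ((hP.fin1 i (P m z)).toFinset).map (addRightEmbedding m),
      bmp i (P k z) := by
    rw [sfn, finsum_eq_sum_of_support_subset _ (s := (hP.fin1 i (P m z)).toFinset) (by simp),
      Finset.sum_map]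
    apply Finset.sum_congr rfl
    intro n _
    rw [addRightEmbedding_apply, hP.add]; rfl
  have h2 : (0 : ℕ × ℕ) ∉ ((hP.fin1 i (P m z)).toFinset).map (addRightEmbedding m) := by
    simp only [Finset.mem_map, addRightEmbedding_apply, not_exists, not_and]
    intro x _ hx
    apply hm
    have a := congrArg Prod.fst hx
    have b := congrArg Prod.snd hx
    simp at a b
    exact Prod.ext a.2 b.2
  have h3 : bmp i z = bmp i (P 0 z) := by rw [hP.zero]; rfl
  rw [h1, h3, add_comm, ← Finset.sum_insert (f := fun k => bmp i (P k z)) h2]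
  exact sum_le_finsum (fun _ => bmp_nonneg _ _) (hP.fin1 i z) _

lemma PAct.nsmul {P} (hP : PAct P) (m : ℕ × ℕ) (n : ℕ) : P (n • m) = P m ^ n := by
  induction n with
  | zero => simp [hP.zero]
  | succ n ih => rw [succ_nsmul, hP.add, ih, pow_succ]

lemma PAct.s_zero {P} (hP : PAct P) (i : ℕ) {m : ℕ × ℕ} (hm : m ≠ 0) (z) :
    ∀ᶠ n : ℕ in atTop, sfn P i ((P m ^ n) z) = 0 := by
  have hf := hP.fin1 i z
  obtain ⟨N, hN⟩ := (hf.image (fun k => k.1 + k.2)).bddAbove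
  filter_upwards [eventually_gt_atTop N] with n hn
  rw [sfn]
  have : ∀ k, bmp i (P k ((P m ^ n) z)) = 0 := by
    intro k
    by_contra hc
    have e : P k ((P m ^ n) z) = P (k + n • m) z := by rw [hP.add, hP.nsmul]; rfl
    rw [e] at hc
    have h := hN ⟨_, hc, rfl⟩
    simp only [Prod.fst_add, Prod.snd_add, Prod.smul_fst, Prod.smul_snd, smul_eq_mul] at h
    have h4 : 1 ≤ m.1 + m.2 := by
      by_contra h5
      exact hm (Prod.ext (by simp; omega) (by simp; omega))
    nlinarith
  simp [this]

def sq1 (s : ℝ) : ℝ := s / (1 + s)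

lemma sq1_lt {s t : ℝ} (h0 : 0 ≤ s) (h : s < t) : sq1 s < sq1 t := by
  unfold sq1
  rw [div_lt_div_iff₀ (by linarith) (by linarith)]
  nlinarith

lemma sq1_le {s t : ℝ} (h0 : 0 ≤ s) (h : s ≤ t) : sq1 s ≤ sq1 t := by
  rcases h.eq_or_lt with h | h
  · rw [h]
  · exact (sq1_lt h0 h).le

lemma sq1_mem {s : ℝ} (h0 : 0 ≤ s) : 0 ≤ sq1 s ∧ sq1 s ≤ 1 := by
  unfold sq1
  refine ⟨by positivity, ?_⟩
  rw [div_le_one (by linarith)]; linarith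

theorem PAct.lyap {P} (hP : PAct P) : ∃ U : Plane → ℝ, Continuous U ∧ (∀ z, 0 < U z) ∧
    (∀ m ≠ 0, ∀ z, U (P m z) < U z) ∧
    ∀ m ≠ 0, ∀ z, Tendsto (fun n : ℕ => U ((P m ^ n) z)) atTop (𝓝 0) := by
  set t : ℕ → Plane → ℝ := fun i z => (1 / 2) ^ i * sq1 (sfn P i z) with ht
  have hsum : Summable (fun i : ℕ => ((1 : ℝ) / 2) ^ i) := summable_geometric_two
  have t0 : ∀ i z, 0 ≤ t i z := fun i z =>
    mul_nonneg (by positivity) (sq1_mem (sfn_nonneg _ _ _)).1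
  have tb : ∀ i z, ‖t i z‖ ≤ (1 / 2) ^ i := by
    intro i z
    rw [Real.norm_of_nonneg (t0 i z)]
    exact mul_le_of_le_one_right (by positivity) (sq1_mem (sfn_nonneg _ _ _)).2
  have ts : ∀ z, Summable (fun i => t i z) := fun z =>
    Summable.of_norm_bounded hsum (fun i => tb i z)
  have tc : ∀ i, Continuous (t i) := by
    intro i
    have := hP.s_cont i
    apply Continuous.mul continuous_const
    apply Continuous.div this (by fun_prop)
    intro z
    have := sfn_nonneg P i z
    positivity
  have tdec : ∀ m ≠ 0, ∀ i z, t i (P m z) ≤ t i z := by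
    intro m hm i z
    have := hP.s_dec i hm z
    have h2 := bmp_nonneg i z
    exact mul_le_mul_of_nonneg_left (sq1_le (sfn_nonneg _ _ _) (by linarith)) (by positivity)
  have tlt : ∀ m ≠ 0, ∀ z, ∃ i, t i (P m z) < t i z := by
    intro m hm z
    obtain ⟨i, hi⟩ := bmp_pos z
    refine ⟨i, ?_⟩
    have := hP.s_dec i hm z
    exact mul_lt_mul_of_pos_left (sq1_lt (sfn_nonneg _ _ _) (by linarith)) (by positivity)
  have dec : ∀ m ≠ 0, ∀ z, ∑' i, t i (P m z) < ∑' i, t i z := by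
    intro m hm z
    obtain ⟨i, hi⟩ := tlt m hm z
    exact Summable.tsum_lt_tsum (fun i => tdec m hm i z) hi (ts _) (ts _)
  refine ⟨fun z => ∑' i, t i z, continuous_tsum tc hsum tb, ?_, dec, ?_⟩
  · intro z
    have := dec (1, 0) (by simp) z
    exact lt_of_le_of_lt (tsum_nonneg (fun i => t0 i _)) this
  · intro m hm z
    have := tendsto_tsum_of_dominated_convergence (𝓕 := atTop)
      (f := fun (n : ℕ) i => t i ((P m ^ n) z)) (g := fun _ => 0) hsum ?_ ?_
    · simpa using this
    · intro i
      apply tendsto_const_nhds.congr'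
      filter_upwards [hP.s_zero i hm z] with n hn
      simp [ht, hn, sq1]
    · exact Eventually.of_forall (fun n i => tb i _)

lemma PAct.inv {P} (hP : PAct P) : PAct (fun n => (P n)⁻¹) where
  zero := by rw [hP.zero, inv_one]
  add m n := by rw [add_comm, hP.add, mul_inv_rev]
  prop K hK := by
    apply (hP.prop K hK).subset
    rintro n ⟨z, h1, h2⟩
    refine ⟨_, h2, ?_⟩
    have : P n ((P n)⁻¹ z) = z := (P n).apply_symm_apply z
    rwa [this]

theorem PAct.lyap2 {P} (hP : PAct P) : ∃ u : Plane → ℝ, Continuous u ∧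
    (∀ m ≠ 0, ∀ z, u z < u (P m z)) ∧
    ∀ m ≠ 0, ∀ z, (∃ n : ℕ, 0 < u ((P m ^ n) z)) ∧ ∃ n : ℕ, u (((P m)⁻¹ ^ n) z) < 0 := by
  obtain ⟨U, c, pos, dec, lim⟩ := hP.lyap
  obtain ⟨V, c', pos', dec', lim'⟩ := hP.inv.lyap
  have inc' : ∀ m ≠ 0, ∀ z, V z < V (P m z) := by
    intro m hm z
    have := dec' m hm (P m z)
    have e : (P m)⁻¹ (P m z) = z := (P m).symm_apply_apply z
    rwa [e] at this
  have inc : ∀ m ≠ 0, ∀ z, U z < U ((P m)⁻¹ z) := by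
    intro m hm z
    have := dec m hm ((P m)⁻¹ z)
    have e : P m ((P m)⁻¹ z) = z := (P m).apply_symm_apply z
    rwa [e] at this
  have it : ∀ (W : Plane → ℝ) (g : Plane ≃ₜ Plane), (∀ z, W z < W (g z)) → ∀ (n : ℕ) z,
      W z ≤ W ((g ^ n) z) := by
    intro W g hW n
    induction n with
    | zero => intro z; simp
    | succ n ih =>
      intro z
      rw [pow_succ']
      exact (ih z).trans (hW _).le
  refine ⟨fun z => V z - U z, c'.sub c, ?_, ?_⟩
  · intro m hm z
    have := inc' m hm z
    have := dec m hm z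
    linarith
  · intro m hm z
    constructor
    · obtain ⟨n, hn⟩ := ((lim m hm z).eventually_lt_const (pos' z)).exists
      exact ⟨n, by have := it V _ (inc' m hm) n z; linarith⟩
    · obtain ⟨n, hn⟩ := ((lim' m hm z).eventually_lt_const (pos z)).exists
      exact ⟨n, by have := it U _ (inc m hm) n z; linarith⟩


def TrH : Plane ≃ₜ Plane := (Homeomorph.addRight (1 : ℝ)).prodCongr (Homeomorph.refl ℝ)

lemma TrH_apply (z) : TrH z = Tr 1 z := by
  simp [TrH, Tr]; rfl

lemma Tr_add (m n : ℤ) (z) : Tr (m + n) z = Tr m (Tr n z) := by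
  simp only [Tr]; push_cast; congr 1; ring

lemma TrH_zpow (k : ℤ) (z) : (TrH ^ k) z = Tr k z := by
  have hinv : ∀ z, TrH⁻¹ z = Tr (-1) z := by
    intro z
    apply TrH.injective
    have : TrH (TrH⁻¹ z) = z := TrH.apply_symm_apply z
    rw [this, TrH_apply, ← Tr_add]; simp [Tr]
  induction k with
  | zero => simp [Tr]
  | succ n ih =>
    rw [add_comm, zpow_one_add, Tr_add, ← ih, ← TrH_apply]; rfl
  | pred n ih =>
    rw [sub_eq_add_neg, add_comm, zpow_add, zpow_neg_one, Tr_add, ← ih, ← hinv]; rfl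

lemma TrH_pow (k : ℕ) (z) : (TrH ^ k) z = Tr k z := by
  rw [← TrH_zpow, zpow_natCast]

lemma strip_right {v : Plane → ℝ} (hv : Continuous v) (hm : ∀ z, v z ≤ v (TrH z))
    (hpos : ∀ z, ∃ n : ℕ, 0 < v ((TrH ^ n) z)) (M : ℝ) :
    ∃ X : ℝ, ∀ x y : ℝ, |y| ≤ M → X ≤ x → 0 < v (x, y) := by
  have hmm : ∀ (m n : ℕ) z, m ≤ n → v ((TrH ^ m) z) ≤ v ((TrH ^ n) z) := by
    intro m n z hmn
    induction n, hmn using Nat.le_induction with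
    | base => rfl
    | succ n _ ih => refine ih.trans ?_; rw [pow_succ']; exact hm _
  have hK : IsCompact (Set.Icc (0 : ℝ) 1 ×ˢ Set.Icc (-M) M) := isCompact_Icc.prod isCompact_Icc
  obtain ⟨N, hN⟩ := hK.elim_directed_cover (fun n : ℕ => {z | 0 < v ((TrH ^ n) z)})
    (fun n => isOpen_lt continuous_const (hv.comp (TrH ^ n).continuous))
    (fun z _ => by simpa using hpos z)
    (directed_of_isDirected_le (fun m n hmn z hz => lt_of_lt_of_le hz (hmm m n z hmn)))
  refine ⟨N, fun x y hy hx => ?_⟩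
  have h1 : ((Int.fract x, y) : Plane) ∈ Set.Icc (0 : ℝ) 1 ×ˢ Set.Icc (-M) M :=
    ⟨⟨Int.fract_nonneg x, (Int.fract_lt_one x).le⟩, abs_le.1 hy⟩
  have h2 : 0 < v ((TrH ^ N) (Int.fract x, y)) := hN h1
  have h3 : (N : ℤ) ≤ ⌊x⌋ := Int.le_floor.2 (by exact_mod_cast hx)
  have h4 := hmm N ⌊x⌋.toNat (Int.fract x, y) (by omega)
  have h5 : (TrH ^ ⌊x⌋.toNat) (Int.fract x, y) = (x, y) := by
    rw [TrH_pow, Int.toNat_of_nonneg (by omega)]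
    simp only [Tr, Int.fract_add_floor]
  rw [h5] at h4
  linarith

lemma strip_left {v : Plane → ℝ} (hv : Continuous v) (hm : ∀ z, v z ≤ v (TrH z))
    (hneg : ∀ z, ∃ n : ℕ, v ((TrH⁻¹ ^ n) z) < 0) (M : ℝ) :
    ∃ X : ℝ, ∀ x y : ℝ, |y| ≤ M → x ≤ -X → v (x, y) < 0 := by
  have hi : ∀ n : ℕ, ∀ z, (TrH⁻¹ ^ n) z = Tr (-n) z := by
    intro n z; rw [← TrH_zpow, zpow_neg, zpow_natCast, inv_pow]
  obtain ⟨X, hX⟩ := strip_right (v := fun z => - v (-z.1, z.2)) (by fun_prop)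
    (by
      intro z
      rw [neg_le_neg_iff]
      have := hm (-(TrH z).1, (TrH z).2)
      refine this.trans (le_of_eq ?_)
      rw [TrH_apply, TrH_apply]
      simp [Tr])
    (by
      intro z
      obtain ⟨n, hn⟩ := hneg (-z.1, z.2)
      refine ⟨n, ?_⟩
      rw [hi] at hn
      rw [TrH_pow]
      simp only [Tr] at hn ⊢
      push_cast at hn ⊢
      rw [neg_add]
      linarith) M
  refine ⟨X, fun x y hy hx => ?_⟩
  have := hX (-x) y hy (by linarith)
  simp only [neg_neg] at this
  linarith

theorem main_curve {P} (hP : PAct P) {m0 : ℕ × ℕ} (hm0 : m0 ≠ 0) (hT : P m0 = TrH) :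
    ∃ (G : Plane → ℝ) (Γ : ℝ → Plane), Continuous G ∧ Continuous Γ ∧ Function.Injective Γ ∧
      range Γ = {z | G z = 0} ∧
      Tendsto (fun t => (Γ t).2) atTop atTop ∧ Tendsto (fun t => (Γ t).2) atBot atBot ∧
      (∀ M : ℝ, ∃ X : ℝ, ∀ x y : ℝ, |y| ≤ M →
        (X ≤ x → 0 < G (x, y)) ∧ (x ≤ -X → G (x, y) < 0)) ∧
      ∃ Em : Set Plane, IsPreconnected Em ∧ (∀ z ∈ Em, G z < 0) ∧
      (∀ M : ℝ, ∃ X : ℝ, ∀ x y : ℝ, |y| ≤ M → x ≤ -X → (x, y) ∈ Em) ∧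
      ∀ m ≠ 0, ∀ z, G z ≤ 0 → G ((P m)⁻¹ z) < 0 := by
  obtain ⟨u, uc, uinc, ulim⟩ := hP.lyap2
  let g : Bool → ℕ × ℕ := fun i => if i then (1, 0) else (0, 1)
  have hg0 : ∀ i, g i ≠ 0 := by intro i; cases i <;> simp [g]
  let Ψ : Bool → Plane ≃ₜ Plane := fun i => (P (g i))⁻¹
  have comm : ∀ i z (n : ℕ), Ψ i ((TrH ^ n) z) = (TrH ^ n) (Ψ i z) := by
    intro i z n
    have h : Commute (P (g i)) TrH := by
      rw [← hT]; show _ * _ = _ * _; rw [← hP.add, ← hP.add, add_comm]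
    have h2 := (h.inv_left.pow_right n).eq
    exact congrArg (fun φ : Plane ≃ₜ Plane => φ z) h2
  have comm' : ∀ i z (n : ℕ), Ψ i ((TrH⁻¹ ^ n) z) = (TrH⁻¹ ^ n) (Ψ i z) := by
    intro i z n
    have h : Commute (P (g i)) TrH := by
      rw [← hT]; show _ * _ = _ * _; rw [← hP.add, ← hP.add, add_comm]
    have h2 := (h.inv_left.inv_right.pow_right n).eq
    exact congrArg (fun φ : Plane ≃ₜ Plane => φ z) h2
  have uT : ∀ z, u z ≤ u (TrH z) := fun z => by
    have := uinc m0 hm0 z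
    rw [hT] at this; exact this.le
  have uΨ : ∀ i z, u (Ψ i z) < u z := by
    intro i z
    have := uinc (g i) (hg0 i) (Ψ i z)
    have e : P (g i) (Ψ i z) = z := (P (g i)).apply_symm_apply z
    rwa [e] at this
  have ur : ∀ z, ∃ n : ℕ, 0 < u ((TrH ^ n) z) := fun z => by
    have := (ulim m0 hm0 z).1; rwa [hT] at this
  have ul : ∀ z, ∃ n : ℕ, u ((TrH⁻¹ ^ n) z) < 0 := fun z => by
    have := (ulim m0 hm0 z).2; rwa [hT] at this
  let A : Set Plane := {z | u z ≤ 0}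
  let B : Set Plane := {z | 0 ≤ u (Ψ true z)} ∪ {z | 0 ≤ u (Ψ false z)}
  have hB : ∀ i z, 0 ≤ u (Ψ i z) → z ∈ B := by
    intro i z h; cases i
    · exact Or.inr h
    · exact Or.inl h
  let Em : Set Plane := {z | ∀ x' ≤ z.1, ∀ y' : ℝ, |y'| ≤ |z.2| → (x', y') ∈ A}
  let Ep : Set Plane := {z | ∀ x' : ℝ, z.1 ≤ x' → ∀ y' : ℝ, |y'| ≤ |z.2| → (x', y') ∈ B}
  have farm : ∀ M : ℝ, ∃ X : ℝ, ∀ x y : ℝ, |y| ≤ M → x ≤ -X → (x, y) ∈ Em := by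
    intro M
    obtain ⟨X, hX⟩ := strip_left uc uT ul M
    exact ⟨X, fun x y hy hx x' hx' y' hy' => (hX x' y' (hy'.trans hy) (hx'.trans hx)).le⟩
  have farp : ∀ M : ℝ, ∃ X : ℝ, ∀ x y : ℝ, |y| ≤ M → X ≤ x → (x, y) ∈ Ep := by
    intro M
    obtain ⟨X, hX⟩ := strip_right (v := fun z => u (Ψ true z)) (uc.comp (Ψ true).continuous)
      (by
        intro z
        have := comm true z 1
        rw [pow_one] at this
        show u _ ≤ u _
        rw [this]; exact uT _)
      (by
        intro z
        obtain ⟨n, hn⟩ := ur (Ψ true z)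
        exact ⟨n, by show 0 < u _; rw [comm]; exact hn⟩) M
    exact ⟨X, fun x y hy hx x' hx' y' hy' =>
      Or.inl (hX x' y' (hy'.trans hy) (hx.trans hx')).le⟩
  have cm : IsPreconnected Em := by
    apply isPreconnected_of_forall_pair
    intro z hz w hw
    have hD : ∀ z ∈ Em, Set.Iic z.1 ×ˢ Set.Icc (-|z.2|) |z.2| ⊆ Em := by
      rintro z hz ⟨x, y⟩ ⟨h1, h2⟩ x' hx' y' hy'
      exact hz x' (le_trans hx' h1) y' (hy'.trans (abs_le.2 h2))
    have hself : ∀ z : Plane, z ∈ Set.Iic z.1 ×ˢ Set.Icc (-|z.2|) |z.2| := fun z =>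
      ⟨Set.mem_Iic.2 le_rfl, abs_le.1 le_rfl⟩
    refine ⟨_, union_subset (hD z hz) (hD w hw), Or.inl (hself z), Or.inr (hself w), ?_⟩
    refine IsPreconnected.union (min z.1 w.1, 0) ?_ ?_
      (isPreconnected_Iic.prod isPreconnected_Icc) (isPreconnected_Iic.prod isPreconnected_Icc)
    · exact ⟨Set.mem_Iic.2 (min_le_left _ _), by simp⟩
    · exact ⟨Set.mem_Iic.2 (min_le_right _ _), by simp⟩
  have cp : IsPreconnected Ep := by
    apply isPreconnected_of_forall_pair
    intro z hz w hw
    have hD : ∀ z ∈ Ep, Set.Ici z.1 ×ˢ Set.Icc (-|z.2|) |z.2| ⊆ Ep := by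
      rintro z hz ⟨x, y⟩ ⟨h1, h2⟩ x' hx' y' hy'
      exact hz x' (le_trans h1 hx') y' (hy'.trans (abs_le.2 h2))
    have hself : ∀ z : Plane, z ∈ Set.Ici z.1 ×ˢ Set.Icc (-|z.2|) |z.2| := fun z =>
      ⟨Set.mem_Ici.2 le_rfl, abs_le.1 le_rfl⟩
    refine ⟨_, union_subset (hD z hz) (hD w hw), Or.inl (hself z), Or.inr (hself w), ?_⟩
    refine IsPreconnected.union (max z.1 w.1, 0) ?_ ?_
      (isPreconnected_Ici.prod isPreconnected_Icc) (isPreconnected_Ici.prod isPreconnected_Icc)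
    · exact ⟨Set.mem_Ici.2 (le_max_left _ _), by simp⟩
    · exact ⟨Set.mem_Ici.2 (le_max_right _ _), by simp⟩
  obtain ⟨G, Γ, g1, g2, g3, g4, g5, g6, g7, g8⟩ := plane_curve Ψ A B Em Ep
    (isClosed_le uc continuous_const)
    ((isClosed_le continuous_const (uc.comp (Ψ true).continuous)).union
      (isClosed_le continuous_const (uc.comp (Ψ false).continuous)))
    (by
      rw [Set.disjoint_left]
      rintro z (h1 : u z ≤ 0) (h2 | h2)
      · have := uΨ true z
        have h2 : 0 ≤ u (Ψ true z) := h2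
        linarith
      · have := uΨ false z
        have h2 : 0 ≤ u (Ψ false z) := h2
        linarith)
    (by
      intro i z hz
      show u _ ≤ 0
      by_contra hc
      exact hz (hB i z (not_le.1 hc).le))
    (fun z hz => hz z.1 le_rfl z.2 le_rfl) (fun z hz => hz z.1 le_rfl z.2 le_rfl)
    cm cp
    (fun y => by obtain ⟨X, hX⟩ := farm |y|; exact ⟨-X, hX _ _ le_rfl le_rfl⟩)
    (fun y => by obtain ⟨X, hX⟩ := farp |y|; exact ⟨X, hX _ _ le_rfl le_rfl⟩)
    (by
      intro i
      obtain ⟨X, hX⟩ := farm 0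
      obtain ⟨Y, hY⟩ := farm |(Ψ i (0, 0)).2|
      obtain ⟨n, hn⟩ := exists_nat_ge (max X (Y + (Ψ i (0, 0)).1))
      have hn1 := (le_max_left _ _).trans hn
      have hn2 := (le_max_right _ _).trans hn
      have hi : ∀ z, (TrH⁻¹ ^ n) z = Tr (-n) z := by
        intro z; rw [← TrH_zpow, zpow_neg, zpow_natCast, inv_pow]
      refine ⟨(TrH⁻¹ ^ n) (0, 0), ?_, ?_⟩
      · rw [hi]; simp only [Tr]; push_cast
        exact hX _ _ (by simp) (by linarith)
      · rw [comm', hi]; simp only [Tr]; push_cast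
        exact hY _ _ le_rfl (by linarith))
    (by
      intro i
      obtain ⟨X, hX⟩ := farp 0
      obtain ⟨Y, hY⟩ := farp |(Ψ i (0, 0)).2|
      obtain ⟨n, hn⟩ := exists_nat_ge (max X (Y - (Ψ i (0, 0)).1))
      have hn1 := (le_max_left _ _).trans hn
      have hn2 := (le_max_right _ _).trans hn
      refine ⟨(TrH ^ n) (0, 0), ?_, ?_⟩
      · rw [TrH_pow]; simp only [Tr]; push_cast
        exact hX _ _ (by simp) (by linarith)
      · rw [comm, TrH_pow]; simp only [Tr]; push_cast
        exact hY _ _ le_rfl (by linarith))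
  have hs : ∀ M : ℝ, ∃ X : ℝ, ∀ x y : ℝ, |y| ≤ M →
        (X ≤ x → 0 < G (x, y)) ∧ (x ≤ -X → G (x, y) < 0) := by
    intro M
    obtain ⟨X, hX⟩ := farm M
    obtain ⟨Y, hY⟩ := farp M
    refine ⟨max X Y, fun x y hy => ⟨fun hx => g7 _ (hY _ _ hy ((le_max_right _ _).trans hx)),
      fun hx => g6 _ (hX _ _ hy ?_)⟩⟩
    have := le_max_left X Y
    linarith
  obtain ⟨Γ', k1, k2, k3, k4, k5⟩ := curve_ends g1 g2 g3 g4 g5 hs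
  refine ⟨G, Γ', g1, k1, k2, k3, k4, k5, hs, Em, cm, g6, farm, ?_⟩
  -- general m
  have hpow : ∀ i (n : ℕ) z, G z ≤ 0 → G ((Ψ i ^ n) z) ≤ 0 := by
    intro i n
    induction n with
    | zero => intro z h; simpa using h
    | succ n ih => intro z h; rw [pow_succ']; exact (g8 i _ (ih z h)).le
  have hpow' : ∀ i (n : ℕ) z, n ≠ 0 → G z ≤ 0 → G ((Ψ i ^ n) z) < 0 := by
    intro i n z hn h
    obtain ⟨k, rfl⟩ := Nat.exists_eq_succ_of_ne_zero hn
    rw [Nat.succ_eq_add_one, pow_succ']; exact g8 i _ (hpow i k z h)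
  intro m hm z hz
  have e : (P m)⁻¹ = Ψ false ^ m.2 * Ψ true ^ m.1 := by
    have : m = m.1 • g true + m.2 • g false := by
      ext <;> simp [g]
    conv_lhs => rw [this, hP.add, hP.nsmul, hP.nsmul, mul_inv_rev]
    simp only [Ψ, inv_pow]
  rw [e]
  show G ((Ψ false ^ m.2) ((Ψ true ^ m.1) z)) < 0
  by_cases h2 : m.2 = 0
  · have h1 : m.1 ≠ 0 := fun h => hm (Prod.ext h h2)
    rw [h2]
    exact hpow' true _ _ h1 hz
  · exact hpow' false _ _ h2 (hpow true _ _ hz)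


lemma homeo_iter (F : Plane ≃ₜ Plane) (n : ℕ) (z) : (F ^ n) z = (⇑F)^[n] z := by
  induction n generalizing z with
  | zero => simp
  | succ n ih => rw [pow_succ, Function.iterate_succ_apply, ← ih]; rfl

lemma rot_limit (F : Plane ≃ₜ Plane) {K : Set Plane} (hK : IsCompact K)
    (zs ws : ℕ → Plane) (ns : ℕ → ℕ) (M : ℕ → ℤ) (hz : ∀ k, zs k ∈ K) (hw : ∀ k, ws k ∈ K)
    (hn : ∀ k, k < ns k) (hF : ∀ k, (⇑F)^[ns k] (zs k) = Tr (M k) (ws k)) :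
    ∃ r ∈ RotWeak ⇑F, (∀ c : ℝ, (∀ k, (M k : ℝ) ≤ c * ns k) → r ≤ (c : EReal)) ∧
      (∀ c : ℝ, (∀ k, c * ns k ≤ (M k : ℝ)) → (c : EReal) ≤ r) := by
  obtain ⟨C, hC⟩ := hK.isBounded.exists_norm_le
  have hC1 : ∀ z ∈ K, |z.1| ≤ C := fun z h => (norm_fst_le z).trans (hC z h)
  set ra : ℕ → ℝ := fun k => (((⇑F)^[ns k] (zs k)).1 - (zs k).1) / (ns k : ℝ) with hra
  obtain ⟨r, φ, hφ, hr⟩ := CompactSpace.tendsto_subseq (fun k => ((ra k : ℝ) : EReal))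
  have hpos : ∀ k, 0 < (ns k : ℝ) := fun k => by exact_mod_cast (Nat.zero_le k).trans_lt (hn k)
  have hns : Tendsto (ns ∘ φ) atTop atTop :=
    tendsto_atTop_mono (fun k => ((hφ.id_le k).trans (hn _).le)) tendsto_id
  have lim0 : Tendsto (fun k => 2 * C / (ns (φ k) : ℝ)) atTop (𝓝 0) :=
    tendsto_const_nhds.div_atTop (tendsto_natCast_atTop_atTop.comp hns)
  have hest : ∀ k, ra k * ns k = M k + ((ws k).1 - (zs k).1) := by
    intro k
    simp only [hra]
    rw [div_mul_cancel₀ _ (hpos k).ne', hF]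
    simp only [Tr]; ring
  have hw' : ∀ k, |(ws k).1 - (zs k).1| ≤ 2 * C := by
    intro k
    have := abs_sub (ws k).1 (zs k).1
    linarith [hC1 _ (hz k), hC1 _ (hw k)]
  refine ⟨r, ?_, ?_, ?_⟩
  · refine Set.mem_biUnion (x := prj '' K) (hK.image prj_cont) ?_
    refine ⟨zs ∘ φ, ns ∘ φ, fun k => ⟨_, hz _, rfl⟩, fun k => ?_,
      fun k => by exact_mod_cast hpos (φ k), hns, hr⟩
    simp only [Function.comp]
    rw [hF, prj_Tr]
    exact ⟨_, hw _, rfl⟩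
  · intro c hc
    have h1 : Tendsto (fun k => ((c + 2 * C / (ns (φ k) : ℝ) : ℝ) : EReal)) atTop (𝓝 (c : EReal)) := by
      apply (continuous_coe_real_ereal.tendsto c).comp
      simpa using lim0.const_add c
    refine le_of_tendsto_of_tendsto' hr h1 (fun k => ?_)
    simp only [Function.comp]
    rw [EReal.coe_le_coe_iff]
    have h2 := hc (φ k)
    have h3 := hest (φ k)
    have h4 := (abs_le.1 (hw' (φ k))).2
    have h5 := hpos (φ k)
    rw [← sub_le_iff_le_add', le_div_iff₀ h5]
    linarith
  · intro c hc
    have h1 : Tendsto (fun k => ((c - 2 * C / (ns (φ k) : ℝ) : ℝ) : EReal)) atTop (𝓝 (c : EReal)) := by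
      apply (continuous_coe_real_ereal.tendsto c).comp
      simpa using lim0.const_sub c
    refine le_of_tendsto_of_tendsto' h1 hr (fun k => ?_)
    simp only [Function.comp]
    rw [EReal.coe_le_coe_iff]
    have h2 := hc (φ k)
    have h3 := hest (φ k)
    have h4 := (abs_le.1 (hw' (φ k))).1
    have h5 := hpos (φ k)
    rw [sub_le_comm, le_div_iff₀ h5]
    linarith

def Pfam (F : Plane ≃ₜ Plane) (p p' : ℤ) (q q' : ℕ) (n : ℕ × ℕ) : Plane ≃ₜ Plane :=
  F ^ ((q : ℤ) * n.1 - q' * n.2) * TrH ^ (p' * n.2 - p * n.1)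

theorem Pfam_act (F : Plane ≃ₜ Plane) (hc : Commute F TrH) (p p' : ℤ) (q q' : ℕ)
    (hq : 0 < q) (hq' : 0 < q') (hFarey : (q : ℤ) * p' - p * q' = 1)
    (hsub : RotWeak ⇑F ⊆
      Set.Ioo ((((p : ℝ) / (q : ℝ) : ℝ)) : EReal) ((((p' : ℝ) / (q' : ℝ) : ℝ)) : EReal)) :
    PAct (Pfam F p p' q q') where
  zero := by simp [Pfam]
  add m n := by
    have h := hc.zpow_zpow ((q : ℤ) * n.1 - q' * n.2) (p' * m.2 - p * m.1)
    simp only [Pfam]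
    rw [mul_assoc, ← mul_assoc (TrH ^ _), ← h.eq, mul_assoc, ← zpow_add, ← mul_assoc, ← zpow_add]
    congr 2 <;> · simp only [Prod.fst_add, Prod.snd_add]; push_cast; ring
  prop K hK := by
    by_contra hinf
    set I := {n | ∃ z ∈ K, Pfam F p p' q q' n z ∈ K} with hI
    let N : ℕ × ℕ → ℤ := fun n => (q : ℤ) * n.1 - q' * n.2
    let m : ℕ × ℕ → ℤ := fun n => p' * n.2 - p * n.1
    have hPf : ∀ n z, Pfam F p p' q q' n z = (F ^ N n) (Tr (m n) z) := by
      intro n z; rw [← TrH_zpow]; rfl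
    have hPf' : ∀ n z, Pfam F p p' q q' n z = Tr (m n) ((F ^ N n) z) := by
      intro n z
      rw [← TrH_zpow]
      have := (hc.zpow_zpow (N n) (m n)).eq
      exact congrArg (fun φ : Plane ≃ₜ Plane => φ z) this
    have inj : Function.Injective (fun n => (N n, m n)) := by
      intro n n' h
      simp only [Prod.mk.injEq, N, m] at h
      obtain ⟨h1, h2⟩ := h
      have e1 : (n.1 : ℤ) = n'.1 := by linear_combination p' * h1 + q' * h2 + (n'.1 - n.1 : ℤ) * hFarey
      have e2 : (n.2 : ℤ) = n'.2 := by linear_combination p * h1 + q * h2 + (n'.2 - n.2 : ℤ) * hFarey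
      exact Prod.ext (by exact_mod_cast e1) (by exact_mod_cast e2)
    have fin1 : ∀ j : ℤ, {n ∈ I | N n = j}.Finite := by
      intro j
      obtain ⟨C, hC⟩ := hK.isBounded.exists_norm_le
      obtain ⟨D, hD⟩ := (hK.image (F ^ j).continuous).isBounded.exists_norm_le
      apply Set.Finite.of_finite_image _ (f := fun n => (N n, m n)) inj.injOn
      apply ((Set.finite_singleton j).prod (Set.finite_Icc (-⌈C + D⌉) ⌈C + D⌉)).subset
      rintro _ ⟨n, ⟨⟨z, h1, h2⟩, rfl⟩, rfl⟩
      refine ⟨rfl, ?_⟩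
      rw [hPf'] at h2
      have a1 := (norm_fst_le _).trans (hC _ h2)
      have a2 := (norm_fst_le _).trans (hD _ ⟨z, h1, rfl⟩)
      simp only [Tr] at a1
      rw [Real.norm_eq_abs] at a1 a2
      rw [abs_le] at a1 a2
      have a3 := Int.le_ceil (C + D)
      constructor
      · have : (-(⌈C + D⌉ : ℤ) : ℝ) ≤ (m n : ℝ) := by linarith
        exact_mod_cast this
      · have : (m n : ℝ) ≤ (⌈C + D⌉ : ℤ) := by linarith
        exact_mod_cast this
    have dich : (∀ L : ℕ, ∃ n ∈ I, (L : ℤ) < N n) ∨ (∀ L : ℕ, ∃ n ∈ I, N n < -(L : ℤ)) := by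
      by_contra hcon
      push Not at hcon
      obtain ⟨⟨L, hL⟩, ⟨L', hL'⟩⟩ := hcon
      apply hinf
      apply ((Set.finite_Icc (-(L' : ℤ)) L).biUnion (fun j _ => fin1 j)).subset
      intro n hn
      exact Set.mem_biUnion (x := N n) ⟨hL' n hn, hL n hn⟩ ⟨hn, rfl⟩
    have hqR : (0 : ℝ) < q := by exact_mod_cast hq
    have hqR' : (0 : ℝ) < q' := by exact_mod_cast hq'
    rcases dich with h | h
    · choose n hn hL using h
      choose z hz hw using hn
      have hNn : ∀ k, ((N (n k)).toNat : ℤ) = N (n k) := fun k =>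
        Int.toNat_of_nonneg (by have := hL k; omega)
      obtain ⟨r, hr, h1, -⟩ := rot_limit F hK z (fun k => Pfam F p p' q q' (n k) (z k))
        (fun k => (N (n k)).toNat) (fun k => -(m (n k))) hz hw
        (fun k => by have := hL k; have := hNn k; omega) (by
          intro k
          rw [← homeo_iter, ← zpow_natCast, hNn, hPf', ← Tr_add]
          simp [Tr])
      have := h1 (p / q) (by
        intro k
        have e : q * -(m (n k)) ≤ p * ((N (n k)).toNat : ℤ) := by
          rw [hNn]
          have : 0 ≤ ((n k).2 : ℤ) := by positivity
          simp only [m, N]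
          linear_combination this - ((n k).2 : ℤ) * hFarey
        have e' : (q : ℝ) * ((-(m (n k)) : ℤ) : ℝ) ≤ p * ((N (n k)).toNat : ℝ) := by
          exact_mod_cast e
        rw [div_mul_eq_mul_div, le_div_iff₀ hqR]
        linarith)
      exact absurd (hsub hr).1 (not_lt.2 this)
    · choose n hn hL using h
      choose z hz hw using hn
      have hNn : ∀ k, ((-N (n k)).toNat : ℤ) = -N (n k) := fun k =>
        Int.toNat_of_nonneg (by have := hL k; omega)
      obtain ⟨r, hr, -, h1⟩ := rot_limit F hK (fun k => Pfam F p p' q q' (n k) (z k)) z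
        (fun k => (-N (n k)).toNat) (fun k => m (n k)) hw hz
        (fun k => by have := hL k; have := hNn k; omega) (by
          intro k
          rw [← homeo_iter, ← zpow_natCast, hNn, hPf, zpow_neg]
          exact (F ^ N (n k)).symm_apply_apply _)
      have := h1 (p' / q') (by
        intro k
        have e : p' * ((-N (n k)).toNat : ℤ) ≤ q' * (m (n k)) := by
          rw [hNn]
          have : 0 ≤ ((n k).1 : ℤ) := by positivity
          simp only [m, N]
          linear_combination this - ((n k).1 : ℤ) * hFarey
        have e' : (p' : ℝ) * ((-N (n k)).toNat : ℝ) ≤ q' * (m (n k) : ℝ) := by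
          exact_mod_cast e
        rw [div_mul_eq_mul_div, div_le_iff₀ hqR']
        linarith)
      exact absurd (hsub hr).2 (not_lt.2 this)

lemma Pfam_T (F : Plane ≃ₜ Plane) (p p' : ℤ) (q q' : ℕ) (hFarey : (q : ℤ) * p' - p * q' = 1) :
    Pfam F p p' q q' (q', q) = TrH := by
  have e1 : (q : ℤ) * (q' : ℕ) - q' * (q : ℕ) = 0 := by ring
  have e2 : p' * (q : ℕ) - p * (q' : ℕ) = 1 := by linarith
  simp only [Pfam]
  rw [e1, e2]; simp

lemma Pfam_eq (F : Plane ≃ₜ Plane) (p p' : ℤ) (q q' : ℕ)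
    (hq : 0 < q) (hq' : 0 < q') (hFarey : (q : ℤ) * p' - p * q' = 1) {ρ : ℝ}
    (hρ : ρ ∈ Set.Ioo ((p : ℝ) / (q : ℝ)) ((p' : ℝ) / (q' : ℝ))) {n m : ℤ}
    (hn : |n| < q + q') (h : 0 < n * ρ + m) :
    ∃ k ≠ 0, Pfam F p p' q q' k = F ^ n * TrH ^ m := by
  have hqR : (0 : ℝ) < q := by exact_mod_cast hq
  have hqR' : (0 : ℝ) < q' := by exact_mod_cast hq'
  have h1 : 0 < q * ρ - p := by have := hρ.1; rw [div_lt_iff₀ hqR] at this; linarith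
  have h2 : 0 < p' - q' * ρ := by have := hρ.2; rw [lt_div_iff₀ hqR'] at this; linarith
  set a : ℤ := p' * n + q' * m with ha
  set b : ℤ := p * n + q * m with hb
  have hFR : (q : ℝ) * p' - p * q' = 1 := by exact_mod_cast hFarey
  have e : n * ρ + m = a * (q * ρ - p) + b * (p' - q' * ρ) := by
    rw [ha, hb]; push_cast
    linear_combination -(n * ρ + m) * hFR
  have en : n = q * a - q' * b := by rw [ha, hb]; linear_combination (-n) * hFarey
  have em : m = p' * b - p * a := by rw [ha, hb]; linear_combination (-m) * hFarey
  have hn' := abs_lt.1 hn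
  have ha0 : 0 ≤ a := by
    by_contra hneg
    push Not at hneg
    have hb1 : 0 < b := by
      by_contra hb1
      push Not at hb1
      have t1 : (a : ℝ) * (q * ρ - p) ≤ 0 :=
        mul_nonpos_of_nonpos_of_nonneg (by exact_mod_cast hneg.le) h1.le
      have t2 : (b : ℝ) * (p' - q' * ρ) ≤ 0 :=
        mul_nonpos_of_nonpos_of_nonneg (by exact_mod_cast hb1) h2.le
      linarith
    have hq1 : (0 : ℤ) < q := by exact_mod_cast hq
    have hq1' : (0 : ℤ) < q' := by exact_mod_cast hq'
    nlinarith
  have hb0 : 0 ≤ b := by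
    by_contra hneg
    push Not at hneg
    have ha1 : 0 < a := by
      by_contra ha1
      push Not at ha1
      have t1 : (a : ℝ) * (q * ρ - p) ≤ 0 :=
        mul_nonpos_of_nonpos_of_nonneg (by exact_mod_cast ha1) h1.le
      have t2 : (b : ℝ) * (p' - q' * ρ) ≤ 0 :=
        mul_nonpos_of_nonpos_of_nonneg (by exact_mod_cast hneg.le) h2.le
      linarith
    have hq1 : (0 : ℤ) < q := by exact_mod_cast hq
    have hq1' : (0 : ℤ) < q' := by exact_mod_cast hq'
    nlinarith
  refine ⟨(a.toNat, b.toNat), ?_, ?_⟩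
  · intro h0
    have x1 := congrArg Prod.fst h0
    have x2 := congrArg Prod.snd h0
    simp at x1 x2
    have a0 : a = 0 := by omega
    have b0 : b = 0 := by omega
    rw [a0, b0] at e
    simp at e
    linarith
  · simp only [Pfam]
    rw [Int.toNat_of_nonneg ha0, Int.toNat_of_nonneg hb0, ← en, ← em]

lemma proper_of_snd {X : Type*} [TopologicalSpace X] [T2Space X] {g : ℝ → X × ℝ} (hg : Continuous g)
    (h1 : Tendsto (fun t => (g t).2) atTop atTop) (h2 : Tendsto (fun t => (g t).2) atBot atBot) :
    IsProperMap g := by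
  have h : IsProperMap (Prod.snd ∘ g) := by
    rw [isProperMap_iff_tendsto_cocompact]
    refine ⟨continuous_snd.comp hg, ?_⟩
    rw [cocompact_eq_atBot_atTop]
    exact h2.sup_sup h1
  exact isProperMap_of_comp_of_t2 hg continuous_snd h

lemma pick_rho {a b : ℝ} (hab : a < b) {n m : ℤ} (h : ¬ (n = 0 ∧ m = 0)) :
    ∃ ρ ∈ Set.Ioo a b, 0 < n * ρ + m ∨ n * ρ + m < 0 := by
  by_contra hc
  push Not at hc
  have h1 := hc ((2 * a + b) / 3) ⟨by linarith, by linarith⟩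
  have h2 := hc ((a + 2 * b) / 3) ⟨by linarith, by linarith⟩
  have e1 := le_antisymm h1.1 h1.2
  have e2 := le_antisymm h2.1 h2.2
  have e3 : (n : ℝ) * (b - a) = 0 := by linear_combination 3 * e2 - 3 * e1
  have hn : (n : ℝ) = 0 := by
    rcases mul_eq_zero.1 e3 with h | h
    · exact h
    · linarith
  rw [hn] at e1
  simp at e1
  exact h ⟨by exact_mod_cast hn, e1⟩

lemma pick_neg {a b ρ : ℝ} (hρ : ρ ∈ Set.Ioo a b) {n m : ℤ} (h : ¬ (n = 0 ∧ m = 0))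
    (hle : n * ρ + m ≤ 0) : ∃ ρ' ∈ Set.Ioo a b, n * ρ' + m < 0 := by
  rcases hle.lt_or_eq with hlt | heq
  · exact ⟨ρ, hρ, hlt⟩
  obtain ⟨h1, h2⟩ := hρ
  rcases lt_trichotomy n 0 with hn | hn | hn
  · have : (n : ℝ) < 0 := by exact_mod_cast hn
    exact ⟨(ρ + b) / 2, ⟨by linarith, by linarith⟩, by nlinarith⟩
  · exfalso
    apply h
    refine ⟨hn, ?_⟩
    rw [hn] at heq; simpa using heq
  · have : (0 : ℝ) < n := by exact_mod_cast hn
    exact ⟨(ρ + a) / 2, ⟨by linarith, by linarith⟩, by nlinarith⟩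

/-- far left points of the axis are sent to far left points by homeomorphisms commuting with `T` -/
lemma far_left {g : Plane ≃ₜ Plane} (hg : Commute g TrH) {Em : Set Plane}
    (far : ∀ M : ℝ, ∃ X : ℝ, ∀ x y : ℝ, |y| ≤ M → x ≤ -X → (x, y) ∈ Em) :
    ∃ s : ℝ, ∀ x ≤ s, g (x, 0) ∈ Em := by
  have hK : IsCompact (Set.Icc (0 : ℝ) 1 ×ˢ ({0} : Set ℝ)) := isCompact_Icc.prod isCompact_singleton
  obtain ⟨D, hD⟩ := (hK.image g.continuous).isBounded.exists_norm_le
  obtain ⟨X, hX⟩ := far D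
  refine ⟨-X - D, fun x hx => ?_⟩
  have e : g (x, 0) = Tr ⌊x⌋ (g (Int.fract x, 0)) := by
    rw [← TrH_zpow]
    have h := (hg.zpow_right ⌊x⌋).eq
    have h2 : g ((TrH ^ ⌊x⌋) (Int.fract x, 0)) = (TrH ^ ⌊x⌋) (g (Int.fract x, 0)) :=
      congrArg (fun φ : Plane ≃ₜ Plane => φ (Int.fract x, 0)) h
    rw [← h2, TrH_zpow]
    simp only [Tr, Int.fract_add_floor]
  have hmem : ((Int.fract x, 0) : Plane) ∈ Set.Icc (0 : ℝ) 1 ×ˢ ({0} : Set ℝ) :=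
    ⟨⟨Int.fract_nonneg x, (Int.fract_lt_one x).le⟩, rfl⟩
  have hb := hD _ ⟨_, hmem, rfl⟩
  have b1 := (norm_fst_le _).trans hb
  have b2 := (norm_snd_le _).trans hb
  rw [Real.norm_eq_abs] at b1 b2
  rw [e]
  simp only [Tr]
  apply hX _ _ b2
  have := (abs_le.1 b1).2
  have := Int.floor_le x
  linarith

lemma Lset_image {C Em : Set Plane} (hEC : Em ⊆ Cᶜ) (cE : IsPreconnected Em)
    (far : ∀ M : ℝ, ∃ X : ℝ, ∀ x y : ℝ, |y| ≤ M → x ≤ -X → (x, y) ∈ Em)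
    {e0 : Plane} (he0 : e0 ∈ Em) {g : Plane ≃ₜ Plane} (hg : Commute g TrH) :
    Lset (g '' C) = g '' connectedComponentIn Cᶜ e0 := by
  obtain ⟨s, hs⟩ := far_left (g := g⁻¹) hg.inv_left far
  have key : ∀ x ≤ s, connectedComponentIn (g '' C)ᶜ ((x, 0) : Plane)
      = g '' connectedComponentIn Cᶜ e0 := by
    intro x hx
    have h1 := hs x hx
    have h2 : connectedComponentIn Cᶜ e0 = connectedComponentIn Cᶜ (g⁻¹ (x, 0)) :=
      connectedComponentIn_eq (cE.subset_connectedComponentIn he0 hEC h1)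
    have h3 : g (g⁻¹ (x, 0)) = (x, 0) := g.apply_symm_apply _
    rw [h2, g.image_connectedComponentIn (hEC h1), h3, Set.image_compl_eq g.bijective]
  ext z
  constructor
  · rintro ⟨t, ht⟩
    have := ht (min s t) (min_le_right _ _)
    rwa [key _ (min_le_left _ _)] at this
  · intro hz
    exact ⟨s, fun x hx => by rw [key x hx]; exact hz⟩

/-- Theorem 5.5 (line translation theorem, weak rotation set version): if `Rot_weak(F)` is
contained in the Farey interval ]p/q, p'/q'[, then there is an essential line `γ = prj ∘ Γ`
in 𝔸 whose first `q+q'-1` iterates under `f` are pairwise disjoint and ordered as the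
corresponding iterates of a vertical line under the rigid rotation of angle `ρ`, for any
`ρ` in the Farey interval. -/
theorem line_translation_generalization_weak
    (f : Ann ≃ₜ Ann) (F : Plane ≃ₜ Plane)
    (hiso : IsotopicToId f) (hint : IntersectionProperty f) (hlift : IsLift f F)
    (p p' : ℤ) (q q' : ℕ) (hq : 0 < q) (hq' : 0 < q')
    (hFarey : (q : ℤ) * p' - p * q' = 1)
    (hsub : RotWeak ⇑F ⊆
      Set.Ioo ((((p : ℝ) / (q : ℝ) : ℝ)) : EReal) ((((p' : ℝ) / (q' : ℝ) : ℝ)) : EReal)) :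
    ∃ Γ : ℝ → Plane, IsEssLinePlane Γ ∧ IsEssLineAnn (prj ∘ Γ) ∧
      (∀ i ∈ Finset.range (q + q'), ∀ j ∈ Finset.range (q + q'), i ≠ j →
        Disjoint ((⇑f)^[i] '' Set.range (prj ∘ Γ)) ((⇑f)^[j] '' Set.range (prj ∘ Γ))) ∧
      (∀ ρ ∈ Set.Ioo ((p : ℝ) / (q : ℝ)) ((p' : ℝ) / (q' : ℝ)),
        ∀ i ∈ Finset.range (q + q'), ∀ j ∈ Finset.range (q + q'), ∀ k : ℤ,
          ((i : ℝ) * ρ + (k : ℝ) < (j : ℝ) * ρ ↔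
            lineLT (Tr k '' ((⇑F)^[i] '' Set.range Γ)) ((⇑F)^[j] '' Set.range Γ))) := by
  
  have hcomm : Commute F TrH := by
    apply Homeomorph.ext
    intro z
    show F (TrH z) = TrH (F z)
    rw [TrH_apply, TrH_apply]
    exact lift_comm hiso hlift z
  have hP := Pfam_act F hcomm p p' q q' hq hq' hFarey hsub
  have hqR : (0 : ℝ) < q := by exact_mod_cast hq
  have hqR' : (0 : ℝ) < q' := by exact_mod_cast hq'
  have hFR : (q : ℝ) * p' - p * q' = 1 := by exact_mod_cast hFarey
  have hlt : (p : ℝ) / q < (p' : ℝ) / q' := by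
    rw [div_lt_div_iff₀ hqR hqR']; linarith
  obtain ⟨G, Γ, Gc, Γc, Γi, Γr, Γt, Γb, -, Em, cE, GE, far, dec⟩ := main_curve hP
    (m0 := (q', q)) (by intro h; have := congrArg Prod.fst h; simp at this; omega)
    (Pfam_T F p p' q q' hFarey)
  have GΓ : ∀ t, G (Γ t) = 0 := fun t => by
    have : Γ t ∈ range Γ := ⟨t, rfl⟩
    rwa [Γr] at this
  have hcg : ∀ n m : ℤ, Commute (F ^ n * TrH ^ m) TrH := fun n m =>
    (hcomm.zpow_left n).mul_left ((Commute.refl TrH).zpow_left m)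
  have hinv : ∀ n m : ℤ, (F ^ n * TrH ^ m)⁻¹ = F ^ (-n) * TrH ^ (-m) := by
    intro n m
    rw [mul_inv_rev, ← zpow_neg, ← zpow_neg, (hcomm.zpow_zpow (-n) (-m)).eq]
  -- the curve is disjoint from its translates
  have dis : ∀ n m : ℤ, ¬ (n = 0 ∧ m = 0) → |n| < q + q' → ∀ s t,
      Γ s ≠ (F ^ n * TrH ^ m) (Γ t) := by
    have aux : ∀ (n m : ℤ), |n| < q + q' → ∀ ρ ∈ Set.Ioo ((p : ℝ) / q) ((p' : ℝ) / q'),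
        0 < n * ρ + m → ∀ s t, Γ s ≠ (F ^ n * TrH ^ m) (Γ t) := by
      intro n m hn ρ hρ h s t he
      obtain ⟨k, hk, ek⟩ := Pfam_eq F p p' q q' hq hq' hFarey hρ hn h
      have h1 := dec k hk (Γ s) (GΓ s).le
      rw [← ek] at he
      have h2 : (Pfam F p p' q q' k)⁻¹ (Γ s) = Γ t := by
        rw [he]; exact (Pfam F p p' q q' k).symm_apply_apply _
      rw [h2, GΓ] at h1
      exact lt_irrefl _ h1
    intro n m h0 hn s t he
    obtain ⟨ρ, hρ, h | h⟩ := pick_rho hlt h0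
    · exact aux n m hn ρ hρ h s t he
    · apply aux (-n) (-m) (by rwa [abs_neg]) ρ hρ (by push_cast; linarith) t s
      rw [← hinv, he]
      exact ((F ^ n * TrH ^ m).symm_apply_apply _).symm
  -- the left side
  set C := range Γ with hC
  have hEC : Em ⊆ Cᶜ := by
    intro z hz hzC
    rw [Γr] at hzC
    exact (GE z hz).ne hzC
  obtain ⟨X0, hX0⟩ := far 0
  have he0 : ((-X0, 0) : Plane) ∈ Em := hX0 _ _ (by simp) le_rfl
  set e0 : Plane := (-X0, 0) with he0def
  set Lc := connectedComponentIn Cᶜ e0 with hLc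
  have hEL : Em ⊆ Lc := cE.subset_connectedComponentIn he0 hEC
  have LC : Lc ⊆ Cᶜ := connectedComponentIn_subset _ _
  have pcL : IsPreconnected Lc := isPreconnected_connectedComponentIn
  have LG : ∀ z ∈ Lc, G z < 0 := by
    intro z hz
    by_contra hc
    push Not at hc
    obtain ⟨w, hw, h0⟩ := pcL.intermediate_value (hEL he0) hz Gc.continuousOn
      ⟨(GE _ he0).le, hc⟩
    apply LC hw
    rw [Γr]; exact h0
  have clG : ∀ z ∈ closure Lc, G z ≤ 0 := fun z hz =>
    closure_minimal (fun w hw => (LG w hw).le) (isClosed_le Gc continuous_const) hz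
  have Cclosed : IsClosed C := by
    rw [Γr]; exact isClosed_eq Gc continuous_const
  have Lopen : IsOpen Lc := Cclosed.isOpen_compl.connectedComponentIn
  have nocl : ¬ closure Lc ⊆ Lc := by
    intro h
    have hcl : IsClosed Lc := isClosed_of_closure_subset h
    have huniv := IsClopen.eq_univ ⟨hcl, Lopen⟩ ⟨_, hEL he0⟩
    have : Γ 0 ∈ Lc := by rw [huniv]; trivial
    exact LC this ⟨0, rfl⟩
  have ltP : ∀ k ≠ 0, Commute (Pfam F p p' q q' k) TrH →
      closure Lc ⊆ Pfam F p p' q q' k '' Lc := by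
    intro k hk hck
    set Q := Pfam F p p' q q' k with hQ
    have h1 : IsPreconnected (⇑(Q⁻¹) '' closure Lc) :=
      pcL.closure.image _ (Q⁻¹).continuous.continuousOn
    obtain ⟨s, hs⟩ := far_left (g := Q⁻¹) hck.inv_left far
    obtain ⟨s', hs'⟩ := far_left (g := 1) (Commute.one_left _) far
    have h2 : ((min s s', 0) : Plane) ∈ Em := hs' _ (min_le_right _ _)
    have h3 : Q⁻¹ (min s s', 0) ∈ Em := hs _ (min_le_left _ _)
    have h4 : ⇑(Q⁻¹) '' closure Lc ⊆ Cᶜ := by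
      rintro _ ⟨z, hz, rfl⟩ hzC
      rw [Γr] at hzC
      exact (dec k hk z (clG z hz)).ne hzC
    have h5 : ⇑(Q⁻¹) '' closure Lc ⊆ Lc := by
      have h6 := h1.subset_connectedComponentIn
        ⟨_, subset_closure (hEL h2), rfl⟩ h4
      rwa [← connectedComponentIn_eq (hEL h3)] at h6
    intro z hz
    exact ⟨Q⁻¹ z, h5 ⟨z, hz, rfl⟩, Q.apply_symm_apply z⟩
  have ltg : ∀ (n m : ℤ), |n| < q + q' → ∀ ρ ∈ Set.Ioo ((p : ℝ) / q) ((p' : ℝ) / q'),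
        0 < n * ρ + m → closure Lc ⊆ (F ^ n * TrH ^ m) '' Lc := by
    intro n m hn ρ hρ h
    obtain ⟨k, hk, ek⟩ := Pfam_eq F p p' q q' hq hq' hFarey hρ hn h
    rw [← ek]
    exact ltP k hk (by rw [ek]; exact hcg n m)
  have ltiff : ∀ (n m : ℤ), |n| < q + q' → ∀ ρ ∈ Set.Ioo ((p : ℝ) / q) ((p' : ℝ) / q'),
        (0 < n * ρ + m ↔ closure Lc ⊆ (F ^ n * TrH ^ m) '' Lc) := by
    intro n m hn ρ hρ
    refine ⟨ltg n m hn ρ hρ, fun h => ?_⟩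
    by_contra hle
    push Not at hle
    by_cases h0 : n = 0 ∧ m = 0
    · rw [h0.1, h0.2] at h
      apply nocl
      intro z hz
      obtain ⟨w, hw, e⟩ := h hz
      have e' : w = z := by simpa using e
      exact e' ▸ hw
    · obtain ⟨ρ', hρ', h'⟩ := pick_neg hρ h0 hle
      have h2 := ltg (-n) (-m) (by rwa [abs_neg]) ρ' hρ' (by push_cast; linarith)
      apply nocl
      intro z hz
      obtain ⟨w, hw, rfl⟩ := h hz
      obtain ⟨v, hv, rfl⟩ := h2 (subset_closure hw)
      rw [← hinv]
      have : (F ^ n * TrH ^ m) ((F ^ n * TrH ^ m)⁻¹ v) = v :=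
        (F ^ n * TrH ^ m).apply_symm_apply v
      rwa [this]
  have prjΓ : Continuous (prj ∘ Γ) := prj_cont.comp Γc
  have iter : ∀ (i : ℕ) z, (⇑f)^[i] (prj z) = prj ((⇑F)^[i] z) := by
    intro i z
    exact ((Function.Semiconj.iterate_right (f := prj) (ga := ⇑F) (gb := ⇑f) hlift i) z).symm
  refine ⟨Γ, ⟨Γc, Γi, proper_of_snd Γc Γt Γb, Γt, Γb⟩,
    ⟨prjΓ, ?_, proper_of_snd prjΓ Γt Γb, Or.inl ⟨Γt, Γb⟩⟩, ?_, ?_⟩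
  · intro s t hst
    obtain ⟨k, hk⟩ := prj_eq hst
    by_cases h0 : k = 0
    · apply Γi
      rw [hk, h0]; simp [Tr]
    · exfalso
      refine dis 0 k (fun h => h0 h.2) (by simp; omega) s t ?_
      rw [hk, ← TrH_zpow]; simp
  · intro i hi j hj hij
    rw [Finset.mem_range] at hi hj
    rw [Set.disjoint_left]
    rintro _ ⟨_, ⟨s, rfl⟩, rfl⟩ ⟨_, ⟨t, rfl⟩, h⟩
    simp only [Function.comp] at h
    rw [iter, iter] at h
    obtain ⟨k, hk⟩ := prj_eq h.symm
    refine dis ((j : ℤ) - i) k (fun h => hij (by omega)) (by rw [abs_lt]; omega) s t ?_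
    rw [← homeo_iter, ← homeo_iter, ← TrH_zpow] at hk
    have e1 : Γ s = (F ^ i)⁻¹ ((F ^ i) (Γ s)) := ((F ^ i).symm_apply_apply _).symm
    rw [e1, hk]
    have e2 : F ^ ((j : ℤ) - i) * TrH ^ k = (F ^ i)⁻¹ * (TrH ^ k * F ^ j) := by
      rw [← zpow_natCast F i, ← zpow_natCast F j, ← zpow_neg, ← (hcomm.zpow_zpow j k).eq,
        ← mul_assoc, ← zpow_add]
      congr 2; ring
    rw [e2]; rfl
  · intro ρ hρ i hi j hj k
    rw [Finset.mem_range] at hi hj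
    have h1 : Tr k '' ((⇑F)^[i] '' C) = (F ^ (i : ℤ) * TrH ^ k) '' C := by
      rw [Set.image_image]
      apply Set.image_congr
      intro z _
      rw [← homeo_iter, ← TrH_zpow, (hcomm.zpow_zpow i k).eq, zpow_natCast]; rfl
    have h2 : (⇑F)^[j] '' C = (F ^ (j : ℤ) * TrH ^ (0 : ℤ)) '' C := by
      apply Set.image_congr
      intro z _
      rw [← homeo_iter]; simp
    rw [lineLT, h1, h2, Lset_image hEC cE far he0 (hcg _ _), Lset_image hEC cE far he0 (hcg _ _)]
    rw [← hLc, ← Homeomorph.image_closure]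
    have h3 := ltiff ((j : ℤ) - i) (-k) (by rw [abs_lt]; omega) ρ hρ
    have h4 : (i : ℝ) * ρ + (k : ℝ) < (j : ℝ) * ρ ↔ 0 < (((j : ℤ) - i : ℤ) : ℝ) * ρ + ((-k : ℤ) : ℝ) := by
      push_cast
      constructor <;> intro h <;> linarith
    rw [h4, h3]
    have e2 : F ^ (j : ℤ) * TrH ^ (0 : ℤ) =
        (F ^ (i : ℤ) * TrH ^ k) * (F ^ ((j : ℤ) - i) * TrH ^ (-k)) := by
      rw [mul_assoc, ← mul_assoc (TrH ^ k), ← (hcomm.zpow_zpow _ k).eq, mul_assoc, ← zpow_add,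
        ← mul_assoc, ← zpow_add]
      congr 2 <;> ring
    rw [e2, show ⇑((F ^ (i : ℤ) * TrH ^ k) * (F ^ ((j : ℤ) - i) * TrH ^ (-k))) =
      ⇑(F ^ (i : ℤ) * TrH ^ k) ∘ ⇑(F ^ ((j : ℤ) - i) * TrH ^ (-k)) from rfl, Set.image_comp,
      Set.image_subset_image_iff (F ^ (i : ℤ) * TrH ^ k).injective]
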